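/- arXiv:0912.0904 — 4 statements merged into one kernel-verified Lean document; each statement's English description precedes it below -/
import Mathlib

section
/- For every ε with 0 < ε < 1 there exist a smooth (time-independent) function H : ℂ → ℝ and a map b : ℝ → ℂ → ℂ with b 0 = id such that: (i) for every z ∈ ℂ and t ∈ ℝ, the curve s ↦ b s z has derivative Complex.I * ∇H (b t z) at time t (i.e. b is the Hamiltonian flow of H); (ii) for every t ∈ ℝ, b t z = z whenever π|z|² ≥ 1 + ε (so each b t is the identity outside the open disc {z : π|z|² < 1 + ε}); and (iii) for every t > 1, the image under b t of the closed disc {z : π|z|² ≤ 1} is contained in the slit disc {z : π|z|² < 1 + ε} \ {z : Im z = 0 and Re z ≥ 0}. -/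
open Real

open Set Filter Topology in
lemma global_sol {v : ℂ → ℂ} {K L : NNReal} (hv : LipschitzWith K v) (hb : ∀ x, ‖v x‖ ≤ L) (z : ℂ) :
    ∃ γ : ℝ → ℂ, γ 0 = z ∧ ∀ t, HasDerivAt γ (v (γ t)) t := by
  have h : ∀ a : ℝ, ∃ γ : ℝ → ℂ, γ 0 = z ∧ ∀ t ∈ Ioo (-a) a, HasDerivAt γ (v (γ t)) t := by
    intro a
    rcases le_or_gt a 0 with ha | ha
    · exact ⟨fun _ => z, rfl, fun t ht => by have := ht.1; have := ht.2; linarith⟩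
    · have hp : IsPicardLindelof (fun _ => v) (tmin := -a) (tmax := a)
          ⟨0, by constructor <;> linarith⟩ z (L * ⟨a, ha.le⟩) 0 L K := by
        apply IsPicardLindelof.of_time_independent (fun x _ => hb x) hv.lipschitzOnWith
        simp only [sub_zero, zero_sub, neg_neg, max_self, NNReal.coe_mul, NNReal.coe_zero]
        exact le_rfl
      obtain ⟨γ, h0, h1⟩ := hp.exists_eq_forall_mem_Icc_hasDerivWithinAt₀
      exact ⟨γ, h0, fun t ht => (h1 t (Ioo_subset_Icc_self ht)).hasDerivAt (Icc_mem_nhds ht.1 ht.2)⟩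
  choose γ h0 h1 using h
  have key : ∀ a b : ℝ, 0 < a → a ≤ b → EqOn (γ a) (γ b) (Ioo (-a) a) := by
    intro a b ha hab
    apply ODE_solution_unique_of_mem_Ioo (v := fun _ => v) (s := fun _ => univ) (K := K) (t₀ := 0)
    · exact fun _ _ => hv.lipschitzOnWith
    · constructor <;> linarith
    · exact fun t ht => ⟨h1 a t ht, trivial⟩
    · exact fun t ht => ⟨h1 b t ⟨by linarith [ht.1], by linarith [ht.2]⟩, trivial⟩
    · rw [h0, h0]
  refine ⟨fun t => γ (|t| + 1) t, h0 _, fun t => ?_⟩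
  have ht : t ∈ Ioo (-(|t| + 1)) (|t| + 1) := by
    rw [mem_Ioo, ← abs_lt]; linarith
  refine (h1 (|t| + 1) t ht).congr_of_eventuallyEq ?_
  filter_upwards [Ioo_mem_nhds ht.1 ht.2] with s hs
  have hs' : s ∈ Ioo (-(|s| + 1)) (|s| + 1) := by
    rw [mem_Ioo, ← abs_lt]; linarith
  rcases le_total |s| |t| with h | h
  · exact key _ _ (by positivity) (by linarith) hs'
  · exact (key _ _ (by positivity) (by linarith) hs).symm

lemma grad_re (H : ℂ → ℝ) (z : ℂ) : (gradient H z).re = fderiv ℝ H z 1 := by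
  rw [← toDual_gradient (𝕜 := ℝ), InnerProductSpace.toDual_apply_apply, Complex.inner]
  simp

lemma grad_im (H : ℂ → ℝ) (z : ℂ) : (gradient H z).im = fderiv ℝ H z Complex.I := by
  rw [← toDual_gradient (𝕜 := ℝ), InnerProductSpace.toDual_apply_apply, Complex.inner]
  simp

/-- For `0 < ε < 1` there is a smooth time-independent Hamiltonian `H : ℂ → ℝ`
whose Hamiltonian flow `b` (i.e. `b 0 = id` and `∂ₜ b t z = I * ∇H (b t z)`) is the identity
outside the disc `{π|z|² < 1 + ε}` and, for every `t > 1`, carries the closed unit-area disc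
into the slit disc `{π|z|² < 1 + ε} \ {Im z = 0 ∧ Re z ≥ 0}`. -/
theorem stmt_1 (ε : ℝ) (hε0 : 0 < ε) (hε1 : ε < 1) :
    ∃ (H : ℂ → ℝ) (b : ℝ → ℂ → ℂ),
      ContDiff ℝ (⊤ : ℕ∞) H ∧
      b 0 = id ∧
      (∀ (z : ℂ) (t : ℝ),
        HasDerivAt (fun s => b s z) (Complex.I * gradient H (b t z)) t) ∧
      (∀ (t : ℝ) (z : ℂ), 1 + ε ≤ π * ‖z‖ ^ 2 → b t z = z) ∧
      (∀ t : ℝ, 1 < t →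
        b t '' {z : ℂ | π * ‖z‖ ^ 2 ≤ 1} ⊆
          {z : ℂ | π * ‖z‖ ^ 2 < 1 + ε} \ {z : ℂ | z.im = 0 ∧ 0 ≤ z.re}) := by
  have hπ := Real.pi_pos
  have hπ3 := Real.pi_gt_three
  let χ : ContDiffBump (0 : ℂ) :=
    { rIn := √(1 / π), rOut := √((1 + ε / 2) / π)
      rIn_pos := by positivity
      rIn_lt_rOut := by
        apply Real.sqrt_lt_sqrt (by positivity)
        gcongr
        linarith }
  have hr1 : χ.rIn < 1 := by
    change √(1 / π) < 1
    rw [Real.sqrt_lt' one_pos, div_lt_iff₀ hπ]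
    linarith
  have hin : ∀ z : ℂ, π * ‖z‖ ^ 2 ≤ 1 → ‖z‖ ≤ χ.rIn := by
    intro z hz
    apply Real.le_sqrt_of_sq_le
    rw [le_div_iff₀ hπ]
    linarith
  have hout : ∀ z : ℂ, 1 + ε ≤ π * ‖z‖ ^ 2 → χ.rOut < ‖z‖ := by
    intro z hz
    change √((1 + ε / 2) / π) < ‖z‖
    have hz0 : 0 < ‖z‖ := by
      rcases (norm_nonneg z).eq_or_lt with h | h
      · rw [← h] at hz; norm_num at hz; linarith
      · exact h
    rw [Real.sqrt_lt' hz0, div_lt_iff₀ hπ]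
    linarith
  have hχ : ContDiff ℝ (⊤ : ℕ∞) χ := χ.contDiff
  set H : ℂ → ℝ := fun z => χ z * z.im with hHdef
  have hH : ContDiff ℝ (⊤ : ℕ∞) H := hχ.mul Complex.imCLM.contDiff
  have hHc : HasCompactSupport H := χ.hasCompactSupport.mul_right
  have hfd : ∀ z w, fderiv ℝ H z w = χ z * w.im + z.im * fderiv ℝ χ z w := by
    intro z w
    have h1 : HasFDerivAt χ (fderiv ℝ χ z) z := (hχ.differentiable (by simp) z).hasFDerivAt
    have h2 : HasFDerivAt (fun z : ℂ => z.im) Complex.imCLM z := Complex.imCLM.hasFDerivAt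
    have h3 : HasFDerivAt H _ z := h1.mul h2
    rw [h3.fderiv]
    simp
  -- the vector field
  set v : ℂ → ℂ := fun z => Complex.I * gradient H z with hvdef
  have hvre : ∀ z, (v z).re = -(χ z + z.im * fderiv ℝ χ z Complex.I) := by
    intro z
    simp [hvdef, grad_im, hfd]
  have hvim : ∀ z, (v z).im = z.im * fderiv ℝ χ z 1 := by
    intro z
    simp [hvdef, grad_re, hfd]
  have hgrad : gradient H = (InnerProductSpace.toDual ℝ ℂ).symm ∘ fderiv ℝ H := rfl
  have hvC : ContDiff ℝ 1 v := by
    apply contDiff_const.mul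
    rw [hgrad]
    exact (InnerProductSpace.toDual ℝ ℂ).symm.contDiff.comp (hH.fderiv_right (by norm_cast))
  have hvc : HasCompactSupport v := by
    apply HasCompactSupport.mul_left
    rw [hgrad]
    exact (hHc.fderiv ℝ).comp_left (map_zero _)
  obtain ⟨K, hK⟩ := hvC.lipschitzWith_of_hasCompactSupport hvc (by simp)
  obtain ⟨L, hL⟩ := hvc.exists_bound_of_continuous hvC.continuous
  have hL' : ∀ x, ‖v x‖ ≤ L.toNNReal := fun x => (hL x).trans (Real.le_coe_toNNReal L)
  obtain ⟨M, hM⟩ := (hχ.lipschitzWith_of_hasCompactSupport χ.hasCompactSupport (by simp))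
  have hM' : ∀ z, ‖fderiv ℝ χ z‖ ≤ M := fun z => norm_fderiv_le_of_lipschitz ℝ hM
  choose γ h0 h1 using global_sol hK hL'
  have huniq : ∀ f g : ℝ → ℂ, (∀ t, HasDerivAt f (v (f t)) t) → (∀ t, HasDerivAt g (v (g t)) t) →
      ∀ t₀, f t₀ = g t₀ → f = g := by
    intro f g hf hg t₀ heq
    exact ODE_solution_unique_univ (v := fun _ => v) (s := fun _ => Set.univ) (K := K)
      (fun _ => hK.lipschitzOnWith) (fun t => ⟨hf t, trivial⟩) (fun t => ⟨hg t, trivial⟩) heq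
  have hvout : ∀ z : ℂ, 1 + ε ≤ π * ‖z‖ ^ 2 → v z = 0 := by
    intro z hz
    have hz' : z ∉ tsupport χ := by
      rw [χ.tsupport_eq]
      simpa using hout z hz
    have e1 : χ z = 0 := image_eq_zero_of_notMem_tsupport hz'
    have e2 : fderiv ℝ χ z = 0 := fderiv_of_notMem_tsupport ℝ hz'
    apply Complex.ext
    · rw [hvre, e1, e2]; simp
    · rw [hvim, e2]; simp
  have hconst : ∀ w z : ℂ, 1 + ε ≤ π * ‖w‖ ^ 2 → ∀ t₀, γ z t₀ = w → ∀ t, γ z t = w := by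
    intro w z hw t₀ he t
    have := huniq (γ z) (fun _ => w) (h1 z)
      (fun t => by simpa [hvout w hw] using hasDerivAt_const t w) t₀ he
    exact congrFun this t
  refine ⟨H, fun t z => γ z t, hH, funext h0, fun z t => h1 z t, ?_, ?_⟩
  · intro t z hz
    exact hconst z z hz 0 (h0 z) t
  · rintro t ht _ ⟨z, hz, rfl⟩
    simp only [Set.mem_ofPred_eq] at hz
    refine ⟨?_, ?_⟩
    · by_contra hcon
      have hcon' : 1 + ε ≤ π * ‖γ z t‖ ^ 2 := not_lt.mp hcon
      have := hconst (γ z t) z hcon' t rfl 0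
      rw [h0] at this
      rw [← this] at hcon'
      linarith
    · rintro ⟨him, hre⟩
      dsimp only at him hre
      have hdim : ∀ s, HasDerivAt (fun s => (γ z s).im)
          ((γ z s).im * fderiv ℝ χ (γ z s) 1) s := by
        intro s
        rw [← hvim]
        exact Complex.imCLM.hasFDerivAt.comp_hasDerivAt s (h1 z s)
      have hzero : (fun s => (γ z s).im) = fun _ => 0 := by
        refine ODE_solution_unique_univ (v := fun s y => y * fderiv ℝ χ (γ z s) 1)
          (s := fun _ => Set.univ) (K := M) (t₀ := t) ?_ (fun s => ⟨hdim s, trivial⟩)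
          (fun s => ⟨by simpa using hasDerivAt_const s (0 : ℝ), trivial⟩) him
        intro s
        apply LipschitzWith.lipschitzOnWith
        apply LipschitzWith.of_dist_le_mul
        intro x y
        rw [dist_eq_norm, dist_eq_norm, ← sub_mul, norm_mul, mul_comm]
        gcongr
        calc _ ≤ ‖fderiv ℝ χ (γ z s)‖ * ‖(1 : ℂ)‖ := ContinuousLinearMap.le_opNorm _ _
          _ ≤ M := by simpa using hM' _
      have hzero' : ∀ s, (γ z s).im = 0 := fun s => congrFun hzero s
      have hdre : ∀ s, HasDerivAt (fun s => (γ z s).re) (-χ (γ z s)) s := by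
        intro s
        have h := Complex.reCLM.hasFDerivAt.comp_hasDerivAt s (h1 z s)
        have e : Complex.reCLM (v (γ z s)) = -χ (γ z s) := by
          rw [Complex.reCLM_apply, hvre, hzero']; simp
        rw [e] at h
        exact h
      have hanti : Antitone (fun s => (γ z s).re) := by
        apply antitone_of_deriv_nonpos (fun s => (hdre s).differentiableAt)
        intro s
        rw [(hdre s).deriv]
        simpa using χ.nonneg
      have hx0 : (γ z 0).re ≤ χ.rIn := by
        rw [h0]
        exact (Complex.re_le_norm z).trans (hin z hz)
      have hone : ∀ s ∈ Set.Icc 0 t, χ (γ z s) = 1 := by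
        intro s hs
        apply χ.one_of_mem_closedBall
        have ha : (γ z t).re ≤ (γ z s).re := hanti hs.2
        have hb : (γ z s).re ≤ (γ z 0).re := hanti hs.1
        have hs' : γ z s = ((γ z s).re : ℂ) := Complex.ext (by simp) (by simp [hzero'])
        rw [mem_closedBall_zero_iff, hs', Complex.norm_real, Real.norm_eq_abs, abs_le]
        constructor <;> linarith
      have hpos : (0 : ℝ) < t := by linarith
      obtain ⟨c, hc, hc'⟩ := exists_hasDerivAt_eq_slope (fun s => (γ z s).re)
        (fun s => -χ (γ z s)) hpos
        (fun s _ => (hdre s).continuousAt.continuousWithinAt) (fun s _ => hdre s)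
      simp only [hone c (Set.Ioo_subset_Icc_self hc)] at hc'
      rw [eq_div_iff (by linarith)] at hc'
      linarith
end

section
/- For every ε with 0 < ε < 1 and every δ with 0 < δ < ε there exist a smooth time-dependent function H : ℝ × ℂ → ℝ and a Hamiltonian flow b : ℝ → ℂ → ℂ of H with b 0 = id such that for every t ≥ 0: (i) b t z = z whenever π|z|² ≥ t + 1 + ε; and (ii) b t maps the set S₀ = {z ∈ ℂ : δ ≤ π|z|² ≤ 1 + ε − δ and the argument of z, measured in [0, 2π), lies in [δ, 2π − δ]} onto the set S_t = {z ∈ ℂ : t + δ ≤ π|z|² ≤ t + 1 + ε − δ and the argument of z, measured in [0, 2π), lies in [δ, 2π − δ]}. -/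
open Real

/-- The argument of a complex number measured in `[0, 2π)`. -/
noncomputable def arg2pi (z : ℂ) : ℝ :=
  if 0 ≤ z.arg then z.arg else z.arg + 2 * π

/-- The region `{t + δ ≤ π|z|² ≤ t + 1 + ε − δ, δ ≤ arg z ≤ 2π − δ}` (argument in `[0,2π)`). -/
def region (ε δ t : ℝ) : Set ℂ :=
  {z : ℂ | t + δ ≤ π * ‖z‖ ^ 2 ∧ π * ‖z‖ ^ 2 ≤ t + 1 + ε - δ ∧
           δ ≤ arg2pi z ∧ arg2pi z ≤ 2 * π - δ}

open Set Metric in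
theorem lip_aux (V : ℝ × ℂ → ℂ) (hV : ContDiff ℝ 1 V) (T R : ℝ) (x : ℂ) :
    ∃ K : NNReal, ∀ t ∈ Icc (-T) T, LipschitzOnWith K (fun z => V (t, z)) (closedBall x R) := by
  obtain ⟨K, hK⟩ := LocallyLipschitzOn.exists_lipschitzOnWith_of_compact
    (s := Icc (-T) T ×ˢ closedBall x R)
    (isCompact_Icc.prod (isCompact_closedBall x R))
    (f := V) (hV.locallyLipschitz.locallyLipschitzOn)
  refine ⟨K, fun t ht a ha b hb => ?_⟩
  have := hK (x := (t, a)) ⟨ht, ha⟩ (y := (t, b)) ⟨ht, hb⟩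
  simpa [Prod.edist_eq] using this

open Set Metric in
theorem uniq_right (V : ℝ × ℂ → ℂ) (hV : ContDiff ℝ 1 V) (T : ℝ) (f g : ℝ → ℂ)
    (hf : ∀ t ∈ Icc 0 T, HasDerivAt f (V (t, f t)) t)
    (hg : ∀ t ∈ Icc 0 T, HasDerivAt g (V (t, g t)) t) (h0 : f 0 = g 0) :
    EqOn f g (Icc 0 T) := by
  have cf : ContinuousOn f (Icc 0 T) := fun t ht => (hf t ht).continuousAt.continuousWithinAt
  have cg : ContinuousOn g (Icc 0 T) := fun t ht => (hg t ht).continuousAt.continuousWithinAt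
  obtain ⟨A, hA⟩ := isCompact_Icc.exists_bound_of_continuousOn cf
  obtain ⟨B, hB⟩ := isCompact_Icc.exists_bound_of_continuousOn cg
  obtain ⟨K, hK⟩ := lip_aux V hV T (max A B) 0
  have hs : ∀ t ∈ Ico 0 T, t ∈ Icc 0 T := fun t ht => ⟨ht.1, ht.2.le⟩
  refine ODE_solution_unique_of_mem_Icc_right (v := fun t z => V (t, z))
    (s := fun _ => closedBall 0 (max A B)) (K := K) ?_ cf ?_ ?_ cg ?_ ?_ h0
  · intro t ht
    exact hK t ⟨by linarith [ht.1, ht.2], ht.2.le⟩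
  · exact fun t ht => (hf t (hs t ht)).hasDerivWithinAt
  · intro t ht
    simpa using Or.inl (hA t (hs t ht))
  · exact fun t ht => (hg t (hs t ht)).hasDerivWithinAt
  · intro t ht
    simpa using Or.inr (hB t (hs t ht))

open Set Metric in
theorem uniq_both (V : ℝ × ℂ → ℂ) (hV : ContDiff ℝ 1 V) (T : ℝ) (hT : 0 < T) (f g : ℝ → ℂ)
    (cf : ContinuousOn f (Icc (-T) T)) (cg : ContinuousOn g (Icc (-T) T))
    (hf : ∀ t ∈ Ioo (-T) T, HasDerivAt f (V (t, f t)) t)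
    (hg : ∀ t ∈ Ioo (-T) T, HasDerivAt g (V (t, g t)) t) (h0 : f 0 = g 0) :
    EqOn f g (Icc (-T) T) := by
  obtain ⟨A, hA⟩ := isCompact_Icc.exists_bound_of_continuousOn cf
  obtain ⟨B, hB⟩ := isCompact_Icc.exists_bound_of_continuousOn cg
  obtain ⟨K, hK⟩ := lip_aux V hV T (max A B) 0
  have hs : ∀ t ∈ Ioo (-T) T, t ∈ Icc (-T) T := fun t ht => ⟨ht.1.le, ht.2.le⟩
  refine ODE_solution_unique_of_mem_Icc (v := fun t z => V (t, z)) (t₀ := 0)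
    (s := fun _ => closedBall 0 (max A B)) (K := K) ?_ ⟨by linarith, hT⟩ cf hf ?_ cg hg ?_ h0
  · intro t ht
    exact hK t (hs t ht)
  · intro t ht
    simpa using Or.inl (hA t (hs t ht))
  · intro t ht
    simpa using Or.inr (hB t (hs t ht))

open Set Metric in
theorem exists_on (V : ℝ × ℂ → ℂ) (hV : ContDiff ℝ 1 V) (T : ℝ) (hT : 0 < T)
    (hb : ∃ L : ℝ, ∀ t ∈ Icc (-T) T, ∀ z, ‖V (t, z)‖ ≤ L) (z : ℂ) :
    ∃ f : ℝ → ℂ, f 0 = z ∧ ContinuousOn f (Icc (-T) T) ∧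
      ∀ t ∈ Ioo (-T) T, HasDerivAt f (V (t, f t)) t := by
  obtain ⟨L, hL⟩ := hb
  have hL0 : 0 ≤ L := (norm_nonneg _).trans (hL 0 ⟨by linarith, hT.le⟩ 0)
  obtain ⟨K, hK⟩ := lip_aux V hV T (L * T) z
  have hp : IsPicardLindelof (fun t z => V (t, z)) (tmin := -T) (tmax := T)
      ⟨0, by linarith, hT.le⟩ z ⟨L * T, by positivity⟩ 0 ⟨L, hL0⟩ K := by
    refine ⟨hK, ?_, fun t ht x _ => hL t ht x, ?_⟩
    · intro x _
      exact (hV.continuous.comp (by fun_prop : Continuous fun t : ℝ => (t, x))).continuousOn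
    · simp only [sub_zero, zero_sub, neg_neg, max_self, NNReal.coe_zero]; exact le_rfl
  obtain ⟨f, h0, hf⟩ := hp.exists_eq_forall_mem_Icc_hasDerivWithinAt₀
  refine ⟨f, h0, fun t ht => (hf t ht).continuousWithinAt, fun t ht => ?_⟩
  exact (hf t ⟨ht.1.le, ht.2.le⟩).hasDerivAt (Icc_mem_nhds ht.1 ht.2)

open Set Metric in
theorem exists_glob (V : ℝ × ℂ → ℂ) (hV : ContDiff ℝ 1 V)
    (hb : ∀ T : ℝ, ∃ L : ℝ, ∀ t ∈ Icc (-T) T, ∀ z, ‖V (t, z)‖ ≤ L) (z : ℂ) :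
    ∃ f : ℝ → ℂ, f 0 = z ∧ ∀ t, HasDerivAt f (V (t, f t)) t := by
  have h : ∀ n : ℕ, ∃ f : ℝ → ℂ, f 0 = z ∧ ContinuousOn f (Icc (-(n + 1 : ℝ)) (n + 1)) ∧
      ∀ t ∈ Ioo (-(n + 1 : ℝ)) (n + 1), HasDerivAt f (V (t, f t)) t :=
    fun n => exists_on V hV (n + 1) (by positivity) (hb _) z
  choose F h0 hc hd using h
  have key : ∀ m n : ℕ, m ≤ n → EqOn (F m) (F n) (Icc (-(m + 1 : ℝ)) (m + 1)) := by
    intro m n hmn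
    have hmn' : (m : ℝ) ≤ n := by exact_mod_cast hmn
    refine uniq_both V hV (m + 1) (by positivity) _ _ (hc m) ((hc n).mono ?_) (hd m) ?_
      ((h0 m).trans (h0 n).symm)
    · exact Icc_subset_Icc (by linarith) (by linarith)
    · exact fun t ht => hd n t ⟨by linarith [ht.1], by linarith [ht.2]⟩
  have key2 : ∀ m n : ℕ, ∀ t : ℝ, |t| ≤ m + 1 → |t| ≤ n + 1 → F m t = F n t := by
    intro m n t hm hn
    rcases le_total m n with h | h
    · exact key m n h (abs_le.1 hm)
    · exact (key n m h (abs_le.1 hn)).symm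
  have hle : ∀ t : ℝ, |t| ≤ (⌈|t|⌉₊ : ℝ) + 1 := fun t => by linarith [Nat.le_ceil |t|]
  refine ⟨fun t => F ⌈|t|⌉₊ t, h0 _, fun t => ?_⟩
  set n := ⌈|t|⌉₊ with hn
  have hlt : |t| < (n : ℝ) + 1 := by linarith [Nat.le_ceil |t|]
  refine (hd n t (abs_lt.1 hlt)).congr_of_eventuallyEq ?_
  filter_upwards [continuous_abs.continuousAt.eventually (gt_mem_nhds hlt)] with s hs
  exact key2 _ _ s (hle s) (le_of_lt hs)

/-- The cut-off Hamiltonian. -/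
noncomputable def hamil (ε δ c₀ c₁ : ℝ) (p : ℝ × ℂ) : ℝ :=
  smoothTransition ((π * ‖p.2‖ ^ 2 - δ / 4) / (δ / 4)) *
  smoothTransition ((1 + ε - δ / 4 - (π * ‖p.2‖ ^ 2 - p.1)) / (δ / 4)) *
  (smoothTransition ((c₁ - p.2.re / ‖p.2‖) / (c₁ - c₀)) *
  (-(1 / (2 * π)) * (Complex.log (-p.2)).im))

theorem slit_of_lt (z : ℂ) (hz : z ≠ 0) (h : z.re / ‖z‖ < 1) : -z ∈ Complex.slitPlane := by
  rw [Complex.mem_slitPlane_iff]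
  by_contra hc
  push Not at hc
  obtain ⟨h1, h2⟩ := hc
  simp only [Complex.neg_re, Complex.neg_im, neg_eq_zero] at h1 h2
  have h3 : z = (z.re : ℂ) := by apply Complex.ext <;> simp [h2]
  have h4 : ‖z‖ = z.re := by
    rw [h3, Complex.norm_real, Complex.ofReal_re, Real.norm_of_nonneg (by linarith)]
  have h5 : z.re ≠ 0 := by rw [← h4]; simpa using hz
  rw [h4, div_self h5] at h
  exact lt_irrefl _ h

theorem hamil_smooth (ε δ c₀ c₁ : ℝ) (hδ : 0 < δ) (hc : c₀ < c₁) (hc1 : c₁ < 1) :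
    ContDiff ℝ (⊤ : ℕ∞) (hamil ε δ c₀ c₁) := by
  rw [contDiff_iff_contDiffAt]
  rintro ⟨t, z⟩
  have hn : ContDiff ℝ (⊤ : ℕ∞) (fun p : ℝ × ℂ => ‖p.2‖ ^ 2) := contDiff_snd.norm_sq ℝ
  by_cases hz : z = 0
  · subst hz
    refine (contDiffAt_const (c := (0 : ℝ))).congr_of_eventuallyEq ?_
    have : ∀ᶠ p : ℝ × ℂ in nhds (t, 0), π * ‖p.2‖ ^ 2 < δ / 4 := by
      have hcont : ContinuousAt (fun p : ℝ × ℂ => π * ‖p.2‖ ^ 2) (t, 0) := by fun_prop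
      exact hcont.eventually (gt_mem_nhds (by simpa using hδ))
    filter_upwards [this] with p hp
    unfold hamil
    rw [smoothTransition.zero_of_nonpos (div_nonpos_of_nonpos_of_nonneg (by linarith) (by linarith))]
    simp
  have hn1 : ContDiffAt ℝ (⊤ : ℕ∞) (fun p : ℝ × ℂ => ‖p.2‖) (t, z) :=
    contDiffAt_snd.norm ℝ hz
  have hre : ContDiffAt ℝ (⊤ : ℕ∞) (fun p : ℝ × ℂ => p.2.re / ‖p.2‖) (t, z) :=
    (Complex.reCLM.contDiff.contDiffAt.comp _ contDiffAt_snd).div hn1 (by simpa using hz)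
  unfold hamil
  refine ContDiffAt.mul (ContDiffAt.mul ?_ ?_) ?_
  · refine (smoothTransition.contDiff (n := ⊤)).contDiffAt.comp (t, z) ?_
    exact ((contDiff_const.mul hn).sub contDiff_const).contDiffAt.div_const _
  · refine (smoothTransition.contDiff (n := ⊤)).contDiffAt.comp (t, z) ?_
    exact (contDiff_const.sub ((contDiff_const.mul hn).sub contDiff_fst)).contDiffAt.div_const _
  · by_cases h1 : z.re / ‖z‖ < 1
    · refine ContDiffAt.mul ?_ (contDiffAt_const.mul ?_)
      · refine (smoothTransition.contDiff (n := ⊤)).contDiffAt.comp (t, z) ?_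
        exact (contDiffAt_const.sub hre).div_const _
      · have hl : ContDiffAt ℝ (⊤ : ℕ∞) Complex.log (-z) :=
          (Complex.contDiffAt_log (slit_of_lt z hz h1)).restrict_scalars ℝ
        exact Complex.imCLM.contDiff.contDiffAt.comp (t, z)
          (hl.comp (t, z) (f := fun p : ℝ × ℂ => -p.2) contDiffAt_snd.neg)
    · refine (contDiffAt_const (c := (0 : ℝ))).congr_of_eventuallyEq ?_
      have : ∀ᶠ p : ℝ × ℂ in nhds (t, z), c₁ < p.2.re / ‖p.2‖ :=
        hre.continuousAt.eventually (lt_mem_nhds (by simp only; linarith))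
      filter_upwards [this] with p hp
      rw [smoothTransition.zero_of_nonpos
        (div_nonpos_of_nonpos_of_nonneg (by linarith) (by linarith))]
      simp

theorem grad_zero (ε δ c₀ c₁ : ℝ) (hδ : 0 < δ) (t : ℝ) (z : ℂ) (h : t + 1 + ε ≤ π * ‖z‖ ^ 2) :
    gradient (fun w => hamil ε δ c₀ c₁ (t, w)) z = 0 := by
  have : (fun w => hamil ε δ c₀ c₁ (t, w)) =ᶠ[nhds z] fun _ => 0 := by
    have : ∀ᶠ w : ℂ in nhds z, t + 1 + ε - δ / 4 < π * ‖w‖ ^ 2 := by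
      have hcont : ContinuousAt (fun w : ℂ => π * ‖w‖ ^ 2) z := by fun_prop
      exact hcont.eventually (lt_mem_nhds (by linarith))
    filter_upwards [this] with w hw
    unfold hamil
    have h2 : smoothTransition ((1 + ε - δ / 4 - (π * ‖w‖ ^ 2 - t)) / (δ / 4)) = 0 :=
      smoothTransition.zero_of_nonpos
        (div_nonpos_of_nonpos_of_nonneg (by linarith) (by linarith))
    simp only [h2]
    simp
  rw [gradient, this.fderiv_eq]
  simp

theorem grad_main (ε δ c₀ c₁ : ℝ) (hδ : 0 < δ) (hc : c₀ < c₁) (hc1 : c₁ < 1) (t : ℝ) (z : ℂ)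
    (hl : δ ≤ π * ‖z‖ ^ 2) (hu : π * ‖z‖ ^ 2 ≤ t + 1 + ε - δ) (ha : z.re / ‖z‖ < c₀) :
    Complex.I * gradient (fun w => hamil ε δ c₀ c₁ (t, w)) z
      = ((1 / (2 * (π * ‖z‖ ^ 2)) : ℝ) : ℂ) * z := by
  have hz : z ≠ 0 := by
    rintro rfl
    simp at hl
    linarith
  have hcont : ContinuousAt (fun w : ℂ => π * ‖w‖ ^ 2) z := by fun_prop
  have hre : ContinuousAt (fun w : ℂ => w.re / ‖w‖) z :=
    Complex.continuous_re.continuousAt.div continuous_norm.continuousAt (by simpa using hz)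
  have hev : (fun w => hamil ε δ c₀ c₁ (t, w)) =ᶠ[nhds z]
      fun w => -(1 / (2 * π)) * (Complex.log (-w)).im := by
    filter_upwards [hcont.eventually (lt_mem_nhds (show δ / 2 < _ by linarith)),
      hcont.eventually (gt_mem_nhds (show _ < t + 1 + ε - δ / 2 by linarith)),
      hre.eventually (gt_mem_nhds ha)] with w h1 h2 h3
    unfold hamil
    simp only
    rw [smoothTransition.one_of_one_le, smoothTransition.one_of_one_le,
      smoothTransition.one_of_one_le]
    · ring
    · rw [le_div_iff₀ (by linarith)]; linarith
    · rw [le_div_iff₀ (by linarith)]; linarith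
    · rw [le_div_iff₀ (by linarith)]; linarith
  have hs := slit_of_lt z hz (by linarith)
  have hlog : HasDerivAt (fun w => Complex.log (-w)) (z⁻¹) z := by
    have := (hasDerivAt_neg z).clog hs
    convert this using 1
    field_simp
  have hF : HasFDerivAt (fun w => -(1 / (2 * π)) * (Complex.log (-w)).im)
      ((-(1 / (2 * π))) • Complex.imCLM.comp
        ((ContinuousLinearMap.toSpanSingleton ℂ (z⁻¹)).restrictScalars ℝ)) z := by
    exact (Complex.imCLM.hasFDerivAt.comp z
      (hlog.hasFDerivAt.restrictScalars ℝ)).const_mul (-(1 / (2 * π)))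
  have hG : HasGradientAt (fun w => -(1 / (2 * π)) * (Complex.log (-w)).im)
      (-Complex.I * (((1 / (2 * (π * ‖z‖ ^ 2)) : ℝ) : ℂ) * z)) z := by
    rw [hasGradientAt_iff_hasFDerivAt]
    refine hF.congr_fderiv (ContinuousLinearMap.ext fun v => ?_)
    have hnz : ‖z‖ ^ 2 ≠ 0 := by simpa using hz
    have hv : (v * z⁻¹).im = (v.im * z.re - v.re * z.im) / ‖z‖ ^ 2 := by
      rw [Complex.mul_im, Complex.inv_re, Complex.inv_im, Complex.normSq_eq_norm_sq]
      field_simp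
      ring
    generalize hk : (1 / (2 * (π * ‖z‖ ^ 2)) : ℝ) = k
    simp [-mul_inv_rev, InnerProductSpace.toDual_apply_apply, Complex.inner, hv]
    rw [← hk]
    field_simp
    ring
  have := (hG.congr_of_eventuallyEq hev).gradient
  rw [this, ← mul_assoc]
  simp

theorem region_re (ε δ t : ℝ) (hδ0 : 0 < δ) (hδ1 : δ < 1) (ht : 0 ≤ t) (z : ℂ)
    (hz : z ∈ region ε δ t) : z ≠ 0 ∧ z.re / ‖z‖ ≤ Real.cos δ := by
  obtain ⟨h1, h2, h3, h4⟩ := hz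
  have hz0 : z ≠ 0 := by
    rintro rfl
    simp at h1
    linarith
  refine ⟨hz0, ?_⟩
  have hcos : Real.cos (arg2pi z) = z.re / ‖z‖ := by
    rw [← Complex.cos_arg hz0]
    unfold arg2pi
    split_ifs
    · rfl
    · rw [Real.cos_add_two_pi]
  rw [← hcos]
  rcases le_total (arg2pi z) π with h | h
  · exact Real.cos_le_cos_of_nonneg_of_le_pi hδ0.le h h3
  · rw [← Real.cos_two_pi_sub]
    exact Real.cos_le_cos_of_nonneg_of_le_pi hδ0.le (by linarith) (by linarith)

theorem arg2pi_mul (r : ℝ) (hr : 0 < r) (z : ℂ) : arg2pi ((r : ℂ) * z) = arg2pi z := by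
  unfold arg2pi
  rw [Complex.arg_real_mul z hr]

/-- The radial scaling factor of the explicit trajectories. -/
noncomputable def scal (u s : ℝ) : ℝ := Real.sqrt ((u + s) / u)

theorem scal_norm (z : ℂ) (u s : ℝ) (hu : 0 < u) (hs : 0 < u + s) (hz : π * ‖z‖ ^ 2 = u) :
    π * ‖(scal u s : ℂ) * z‖ ^ 2 = u + s := by
  have h : scal u s ^ 2 = (u + s) / u := Real.sq_sqrt (by positivity)
  rw [norm_mul, mul_pow, Complex.norm_real, Real.norm_eq_abs, sq_abs, h]
  rw [mul_left_comm, hz]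
  field_simp

theorem scal_region (ε δ t s : ℝ) (hδ0 : 0 < δ) (ht : 0 ≤ t) (hts : 0 ≤ t + s) (z : ℂ)
    (hz : z ∈ region ε δ t) : (scal (π * ‖z‖ ^ 2) s : ℂ) * z ∈ region ε δ (t + s) := by
  obtain ⟨h1, h2, h3, h4⟩ := hz
  have hu : 0 < π * ‖z‖ ^ 2 := by linarith
  have hus : 0 < π * ‖z‖ ^ 2 + s := by linarith
  have hr : 0 < scal (π * ‖z‖ ^ 2) s := Real.sqrt_pos.2 (div_pos hus hu)
  refine ⟨?_, ?_, ?_, ?_⟩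
  · rw [scal_norm z _ s hu hus rfl]; linarith
  · rw [scal_norm z _ s hu hus rfl]; linarith
  · rwa [arg2pi_mul _ hr]
  · rwa [arg2pi_mul _ hr]

theorem scal_deriv (z : ℂ) (u s : ℝ) (hu : 0 < u) (hs : 0 < u + s) :
    HasDerivAt (fun s => (scal u s : ℂ) * z)
      (((1 / (2 * (u + s)) : ℝ) : ℂ) * ((scal u s : ℂ) * z)) s := by
  have h1 : HasDerivAt (fun s => (u + s) / u) (1 / u) s :=
    ((hasDerivAt_id s).const_add u).div_const u
  have h2 := h1.sqrt (by positivity)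
  have h3 := (h2.ofReal_comp).mul_const z
  refine h3.congr_deriv ?_
  rw [← mul_assoc]
  congr 1
  rw [← Complex.ofReal_mul]
  congr 1
  have h : scal u s ^ 2 = (u + s) / u := Real.sq_sqrt (by positivity)
  have hp : 0 < scal u s := Real.sqrt_pos.2 (by positivity)
  change 1 / u / (2 * scal u s) = 1 / (2 * (u + s)) * scal u s
  rw [eq_div_iff hu.ne'] at h
  rw [← h]
  field_simp

theorem scal_scal (z : ℂ) (t : ℝ) (h : 0 < π * ‖z‖ ^ 2) (ht : 0 < π * ‖z‖ ^ 2 + -t) :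
    (scal (π * ‖(scal (π * ‖z‖ ^ 2) (-t) : ℂ) * z‖ ^ 2) t : ℂ) *
      ((scal (π * ‖z‖ ^ 2) (-t) : ℂ) * z) = z := by
  rw [scal_norm z _ (-t) h ht rfl, ← mul_assoc, ← Complex.ofReal_mul]
  have : scal (π * ‖z‖ ^ 2 + -t) t * scal (π * ‖z‖ ^ 2) (-t) = 1 := by
    unfold scal
    rw [← Real.sqrt_mul (div_nonneg (by linarith) ht.le), Real.sqrt_eq_one]
    generalize π * ‖z‖ ^ 2 = u at *
    rw [neg_add_cancel_right]
    field_simp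
  rw [this]
  simp

/-- For `0 < ε < 1` and `0 < δ < ε` there are a smooth time-dependent Hamiltonian
`H : ℝ × ℂ → ℝ` and a Hamiltonian flow `b` of `H` such that for all `t ≥ 0`: `b t` is the
identity on `{π|z|² ≥ t + 1 + ε}`, and `b t` maps `region ε δ 0` onto `region ε δ t`. -/
theorem stmt_2 (ε δ : ℝ) (hε0 : 0 < ε) (hε1 : ε < 1) (hδ0 : 0 < δ) (hδε : δ < ε) :
    ∃ (H : ℝ × ℂ → ℝ) (b : ℝ → ℂ → ℂ),
      ContDiff ℝ (⊤ : ℕ∞) H ∧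
      b 0 = id ∧
      (∀ (z : ℂ) (t : ℝ),
        HasDerivAt (fun s => b s z) (Complex.I * gradient (fun w => H (t, w)) (b t z)) t) ∧
      (∀ t : ℝ, 0 ≤ t →
        (∀ z : ℂ, t + 1 + ε ≤ π * ‖z‖ ^ 2 → b t z = z) ∧
        b t '' region ε δ 0 = region ε δ t) := by
  have hδ1 : δ < 1 := by linarith
  have hcosδ : Real.cos δ < 1 := by
    have := Real.cos_lt_cos_of_nonneg_of_le_pi (x := 0) (y := δ) le_rfl
      (by linarith [Real.pi_gt_three]) hδ0
    simpa using this
  obtain ⟨c₀, hc0, hc0'⟩ := exists_between hcosδ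
  obtain ⟨c₁, hc1, hc1'⟩ := exists_between hc0'
  have hH := hamil_smooth ε δ c₀ c₁ hδ0 hc1 hc1'
  set H := hamil ε δ c₀ c₁ with hHdef
  let V : ℝ × ℂ → ℂ := fun p => Complex.I * gradient (fun w => H (p.1, w)) p.2
  have hV : ContDiff ℝ 1 V := by
    have h1 : ContDiff ℝ 1 (fun p : ℝ × ℂ => fderiv ℝ (fun w => H (p.1, w)) p.2) := by
      refine ContDiff.fderiv (f := fun (p : ℝ × ℂ) w => H (p.1, w)) (m := (⊤ : ℕ∞)) (n := 1)
        ?_ contDiff_snd ?_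
      · exact hH.comp ((contDiff_fst.comp contDiff_fst).prodMk contDiff_snd)
      · exact WithTop.coe_le_coe.2 (le_top (a := (1 + 1 : ℕ∞)))
    have h2 : ContDiff ℝ 1 (fun p : ℝ × ℂ => gradient (fun w => H (p.1, w)) p.2) :=
      ((InnerProductSpace.toDual ℝ ℂ).symm.toContinuousLinearEquiv.contDiff).comp h1
    exact contDiff_const.mul h2
  have hV0 : ∀ t z, t + 1 + ε ≤ π * ‖z‖ ^ 2 → V (t, z) = 0 := by
    intro t z h
    simp only [V, hHdef, grad_zero ε δ c₀ c₁ hδ0 t z h, mul_zero]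
  have hVb : ∀ T : ℝ, ∃ L : ℝ, ∀ t ∈ Set.Icc (-T) T, ∀ z, ‖V (t, z)‖ ≤ L := by
    intro T
    obtain ⟨L, hL⟩ := ((isCompact_Icc (a := -T) (b := T)).prod
      (isCompact_closedBall (0 : ℂ) (|T| + 2))).exists_bound_of_continuousOn
      hV.continuous.continuousOn
    refine ⟨max L 0, fun t ht z => ?_⟩
    by_cases hz : ‖z‖ ≤ |T| + 2
    · exact (hL (t, z) ⟨ht, by simpa using hz⟩).trans (le_max_left _ _)
    · rw [hV0 t z]
      · simp
      · push Not at hz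
        have h1 : t ≤ |T| := ht.2.trans (le_abs_self T)
        have h2 := abs_nonneg T
        have h3 := Real.pi_gt_three
        have h4 : |T| + 2 ≤ ‖z‖ ^ 2 := by nlinarith
        nlinarith
  choose f hf0 hf using exists_glob V hV hVb
  refine ⟨H, fun t z => f z t, hH, funext hf0, fun z t => hf z t, fun t ht => ⟨?_, ?_⟩⟩
  · intro z hz
    have := uniq_right V hV t (f z) (fun _ => z) (fun s _ => hf z s) ?_ (hf0 z)
    · exact this ⟨ht, le_rfl⟩
    · intro s hs
      rw [hV0 s z (by linarith [hs.2])]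
      exact hasDerivAt_const s z
  · have key : ∀ z ∈ region ε δ 0, f z t = (scal (π * ‖z‖ ^ 2) t : ℂ) * z := by
      intro z hz
      have hu : 0 < π * ‖z‖ ^ 2 := by linarith [hz.1]
      have := uniq_right V hV t (f z) (fun s => (scal (π * ‖z‖ ^ 2) s : ℂ) * z)
        (fun s _ => hf z s) ?_ ?_
      · exact this ⟨ht, le_rfl⟩
      · intro s hs
        have hus : 0 < π * ‖z‖ ^ 2 + s := by linarith [hs.1]
        have hr := scal_region ε δ 0 s hδ0 le_rfl (by linarith [hs.1]) z hz
        rw [zero_add] at hr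
        have hg := grad_main ε δ c₀ c₁ hδ0 hc1 hc1' s _ (by linarith [hr.1, hs.1]) hr.2.1
          ((region_re ε δ s hδ0 hδ1 hs.1 _ hr).2.trans_lt hc0)
        simp only [V, hHdef]
        rw [hg, scal_norm z _ s hu hus rfl]
        exact scal_deriv z _ s hu hus
      · simp [hf0, scal, div_self hu.ne']
    ext w
    constructor
    · rintro ⟨z, hz, rfl⟩
      simp only
      rw [key z hz]
      simpa using scal_region ε δ 0 t hδ0 le_rfl (by linarith) z hz
    · intro hw
      have hz := scal_region ε δ t (-t) hδ0 ht (by linarith) w hw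
      rw [add_neg_cancel] at hz
      refine ⟨_, hz, ?_⟩
      simp only
      rw [key _ hz]
      exact scal_scal w t (by linarith [hw.1]) (by linarith [hw.1])
end

section
/- For every real A ≥ 0 and every ε with 0 < ε < 1 there exist a smooth time-dependent function F : ℝ × ℂ → ℝ with F t z = 0 whenever π|z|² ≥ 1 + A + ε, and a Hamiltonian flow b : ℝ → ℂ → ℂ of F with b 0 = id, such that the time-one map b 1 carries the closed disc {z ∈ ℂ : π|z|² ≤ 1} into the open annulus {z ∈ ℂ : A < π|z|² < 1 + A + ε}. -/
open Real

lemma aux_ode_global (X : ℝ × ℂ → ℂ) (K L : NNReal) (hX : LipschitzWith K X)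
    (hL : ∀ p, ‖X p‖ ≤ L) (z : ℂ) :
    ∃ γ : ℝ → ℂ, γ 0 = z ∧ ∀ t, HasDerivAt γ (X (t, γ t)) t := by
  have hlip : ∀ t, LipschitzWith K (fun w => X (t, w)) := by
    intro t
    have := hX.comp (LipschitzWith.prodMk_left (α := ℝ) (β := ℂ) t)
    rw [mul_one] at this
    exact this
  have h1 : ∀ n : ℕ, ∃ α : ℝ → ℂ, α 0 = z ∧
      ∀ t ∈ Set.Ioo (-((n : ℝ) + 1)) ((n : ℝ) + 1), HasDerivAt α (X (t, α t)) t := by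
    intro n
    have hn : (0 : ℝ) < (n : ℝ) + 1 := by positivity
    have h0 : (0 : ℝ) ∈ Set.Icc (-((n : ℝ) + 1)) ((n : ℝ) + 1) := ⟨by linarith, by linarith⟩
    have hPL : IsPicardLindelof (fun t w => X (t, w)) (⟨0, h0⟩ : Set.Icc (-((n : ℝ) + 1)) ((n : ℝ) + 1))
        z (L * (n + 1)) 0 L K := by
      refine ⟨fun t _ => (hlip t).lipschitzOnWith, fun x _ => ?_, fun t _ x _ => hL _, ?_⟩
      · exact (hX.continuous.comp (by fun_prop)).continuousOn
      · simp
    obtain ⟨α, hα0, hα⟩ := hPL.exists_eq_forall_mem_Icc_hasDerivWithinAt₀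
    refine ⟨α, hα0, fun t ht => ?_⟩
    exact (hα t (Set.Ioo_subset_Icc_self ht)).hasDerivAt (Icc_mem_nhds ht.1 ht.2)
  choose α hα0 hα using h1
  have hagree : ∀ m n : ℕ, m ≤ n →
      Set.EqOn (α m) (α n) (Set.Ioo (-((m : ℝ) + 1)) ((m : ℝ) + 1)) := by
    intro m n hmn
    have hmn' : (m : ℝ) ≤ n := by exact_mod_cast hmn
    have hm : (0 : ℝ) < (m : ℝ) + 1 := by positivity
    refine ODE_solution_unique_of_mem_Ioo (v := fun t w => X (t, w)) (s := fun _ => Set.univ)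
      (K := K) (t₀ := 0) (fun t _ => (hlip t).lipschitzOnWith) ⟨by linarith, by linarith⟩ 
      (fun t ht => ⟨hα m t ht, trivial⟩) (fun t ht => ⟨hα n t ⟨by linarith [ht.1], by linarith [ht.2]⟩, trivial⟩)
      (by rw [hα0, hα0])
  have hkey : ∀ n : ℕ, ∀ t ∈ Set.Ioo (-((n : ℝ) + 1)) ((n : ℝ) + 1), α ⌈|t|⌉₊ t = α n t := by
    intro n t ht
    have h2 : |t| ≤ (⌈|t|⌉₊ : ℝ) := Nat.le_ceil _
    have h3 := abs_le.1 h2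
    rcases le_total ⌈|t|⌉₊ n with h | h
    · exact hagree _ _ h ⟨by linarith, by linarith⟩
    · exact (hagree _ _ h ht).symm
  refine ⟨fun t => α ⌈|t|⌉₊ t, by simpa using hα0 _, fun t => ?_⟩
  have ht : t ∈ Set.Ioo (-((⌈|t|⌉₊ : ℝ) + 1)) ((⌈|t|⌉₊ : ℝ) + 1) := by
    have h3 := abs_le.1 (Nat.le_ceil |t|)
    exact ⟨by linarith, by linarith⟩
  refine (hα _ t ht).congr_of_eventuallyEq ?_
  filter_upwards [isOpen_Ioo.mem_nhds ht] with s hs using hkey _ s hs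

/-- Fibrewise inverse of a smooth family of increasing diffeomorphisms of the line. -/
lemma aux_inverse (M m : ℝ × ℝ → ℝ) (hM : ContDiff ℝ (⊤ : ℕ∞) M) (δ : ℝ) (hδ : 0 < δ)
    (hm : ∀ t x, HasDerivAt (fun y => M (t, y)) (m (t, x)) x) (hmδ : ∀ p, δ ≤ m p) :
    ∃ N : ℝ × ℝ → ℝ, ContDiff ℝ (⊤ : ℕ∞) N ∧ (∀ t u, M (t, N (t, u)) = u) ∧
      ∀ t x, N (t, M (t, x)) = x := by
  have hmono : ∀ t, StrictMono (fun y => M (t, y)) := fun t =>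
    strictMono_of_deriv_pos (fun x => by rw [(hm t x).deriv]; exact hδ.trans_le (hmδ _))
  have hgrow : ∀ t x y, x ≤ y → δ * (y - x) ≤ M (t, y) - M (t, x) := by
    intro t x y hxy
    exact mul_sub_le_image_sub_of_le_deriv (f := fun y => M (t, y))
      (fun x => (hm t x).differentiableAt) 
      (fun x => by rw [(hm t x).deriv]; exact hmδ _) hxy
  have hsurj : ∀ t u, ∃ x, M (t, x) = u := by
    intro t u
    have hcont : Continuous (fun y => M (t, y)) := hM.continuous.comp (by fun_prop)
    have ha : M (t, -(|u - M (t, 0)| / δ)) ≤ u := by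
      have h := hgrow t (-(|u - M (t, 0)| / δ)) 0 (by simp; positivity)
      have h2 : δ * (0 - -(|u - M (t, 0)| / δ)) = |u - M (t, 0)| := by field_simp; ring
      rw [h2] at h
      have := neg_abs_le (u - M (t, 0))
      linarith
    have hb : u ≤ M (t, (|u - M (t, 0)| / δ)) := by
      have h := hgrow t 0 (|u - M (t, 0)| / δ) (by positivity)
      have h2 : δ * (|u - M (t, 0)| / δ - 0) = |u - M (t, 0)| := by field_simp; ring
      rw [h2] at h
      have := le_abs_self (u - M (t, 0))
      linarith
    exact mem_range_of_exists_le_of_exists_ge hcont ⟨_, ha⟩ ⟨_, hb⟩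
  choose N hN using hsurj
  have hNl : ∀ t x, N t (M (t, x)) = x := fun t x => (hmono t).injective (hN t _)
  refine ⟨fun p => N p.1 p.2, ?_, hN, hNl⟩
  rw [contDiff_iff_contDiffAt]
  rintro ⟨t, u⟩
  set x := N t u with hx
  have hxu : M (t, x) = u := hN t u
  let Ψ : ℝ × ℝ → ℝ × ℝ := fun p => (p.1, M p)
  have hΨ : ContDiff ℝ (⊤ : ℕ∞) Ψ := contDiff_fst.prodMk hM
  let M' := fderiv ℝ M (t, x)
  have hM' : HasFDerivAt M M' (t, x) := (hM.differentiable (by simp)).differentiableAt.hasFDerivAt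
  have hM'2 : M' (0, 1) = m (t, x) := by
    have h1 : HasDerivAt (fun y : ℝ => (t, y)) ((0 : ℝ), (1 : ℝ)) x :=
      (hasDerivAt_const x t).prodMk (hasDerivAt_id x)
    exact (hM'.comp_hasDerivAt x h1).unique (hm t x)
  have hmpos : m (t, x) ≠ 0 := (hδ.trans_le (hmδ _)).ne'
  have hsplit : ∀ a b : ℝ, M' (a, b) = M' (a, 0) + b * m (t, x) := by
    intro a b
    have : ((a, b) : ℝ × ℝ) = (a, 0) + b • ((0 : ℝ), (1 : ℝ)) := by simp
    rw [this, map_add, map_smul, hM'2]; simp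
  let e : (ℝ × ℝ) ≃L[ℝ] (ℝ × ℝ) := ContinuousLinearEquiv.equivOfInverse
    ((ContinuousLinearMap.fst ℝ ℝ ℝ).prod M')
    ((ContinuousLinearMap.fst ℝ ℝ ℝ).prod ((m (t, x))⁻¹ • (ContinuousLinearMap.snd ℝ ℝ ℝ -
      M'.comp ((ContinuousLinearMap.inl ℝ ℝ ℝ).comp (ContinuousLinearMap.fst ℝ ℝ ℝ)))))
    (by
      rintro ⟨a, b⟩
      simp only [ContinuousLinearMap.prod_apply, ContinuousLinearMap.coe_fst', smul_apply, sub_apply, ContinuousLinearMap.coe_snd', ContinuousLinearMap.comp_apply, ContinuousLinearMap.inl_apply, smul_eq_mul, hsplit a b]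
      ext <;> simp
      field_simp)
    (by
      rintro ⟨a, b⟩
      simp only [ContinuousLinearMap.prod_apply, ContinuousLinearMap.coe_fst', smul_apply, sub_apply, ContinuousLinearMap.coe_snd', ContinuousLinearMap.comp_apply, ContinuousLinearMap.inl_apply, smul_eq_mul]
      rw [hsplit]
      ext <;> simp
      field_simp
      ring)
  have hΨ' : HasFDerivAt Ψ (e : (ℝ × ℝ) →L[ℝ] (ℝ × ℝ)) (t, x) := hasFDerivAt_fst.prodMk hM'
  have hloc := (hΨ.contDiffAt (x := (t, x))).to_localInverse hΨ' (by simp)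
  have hstr := (hΨ.contDiffAt (x := (t, x))).hasStrictFDerivAt' hΨ' (by simp)
  have huniq := hstr.localInverse_unique (g := fun p => (p.1, N p.1 p.2))
    (Filter.Eventually.of_forall fun p => by simp [Ψ, hNl])
  have hpt : Ψ (t, x) = (t, u) := by simp [Ψ, hxu]
  rw [hpt] at hloc huniq
  have h2 : ContDiffAt ℝ (⊤ : ℕ∞) (fun p : ℝ × ℝ => (p.1, N p.1 p.2)) (t, u) :=
    hloc.congr_of_eventuallyEq huniq
  exact contDiffAt_snd.comp _ h2

lemma aux_smooth_height (r δ : ℝ) (hδ : 0 < δ) :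
    ∃ q : ℝ → ℝ, ContDiff ℝ (⊤ : ℕ∞) q ∧ (∀ x, √(r ^ 2 - x ^ 2) + δ < q x) ∧
      ∀ x, q x < √(r ^ 2 - x ^ 2) + 2 * δ := by
  have hc : Continuous (fun x : ℝ => √(r ^ 2 - x ^ 2) + 3 / 2 * δ) := by fun_prop
  obtain ⟨q, hq, hq2, -⟩ := hc.exists_contDiff_approx ⊤ (ε := fun _ => δ / 2)
    continuous_const (fun _ => by positivity)
  refine ⟨q, hq, fun x => ?_, fun x => ?_⟩ <;>
  · have := abs_lt.1 (hq2 x)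
    linarith [this.1, this.2]

lemma aux_primitive (q : ℝ → ℝ) (hq : ContDiff ℝ (⊤ : ℕ∞) q) (a : ℝ) :
    ContDiff ℝ (⊤ : ℕ∞) (fun x => ∫ s in a..x, q s) ∧
      ∀ x, HasDerivAt (fun x => ∫ s in a..x, q s) (q x) x := by
  have h : ∀ x, HasDerivAt (fun x => ∫ s in a..x, q s) (q x) x := fun x =>
    intervalIntegral.integral_hasDerivAt_right (hq.continuous.intervalIntegrable _ _)
      (hq.continuous.stronglyMeasurableAtFilter _ _) hq.continuous.continuousAt
  refine ⟨?_, h⟩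
  have := contDiff_infty_iff_deriv (𝕜 := ℝ) (f := (fun x => ∫ s in a..x, q s))
  refine this.2 ⟨fun x => (h x).differentiableAt, ?_⟩
  have hd : deriv (fun x => ∫ s in a..x, q s) = q := funext fun x => (h x).deriv
  rw [hd]; exact hq

lemma aux_halfdisc (r : ℝ) (hr : 0 ≤ r) : ∫ x in (-r)..r, √(r ^ 2 - x ^ 2) = π * r ^ 2 / 2 := by
  rcases hr.eq_or_lt with rfl | hr
  · simp
  have h := intervalIntegral.smul_integral_comp_mul_left (a := -1) (b := 1)
    (fun x => √(r ^ 2 - x ^ 2)) r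
  have h2 : (fun x : ℝ => √(r ^ 2 - (r * x) ^ 2)) = fun x => r * √(1 - x ^ 2) := by
    ext x
    rw [show r ^ 2 - (r * x) ^ 2 = r ^ 2 * (1 - x ^ 2) by ring, Real.sqrt_mul (by positivity),
      Real.sqrt_sq hr.le]
  rw [h2, intervalIntegral.integral_const_mul, integral_sqrt_one_sub_sq] at h
  simp only [mul_neg, mul_one, smul_eq_mul] at h
  rw [← h]; ring

lemma aux_deriv_transition (t : ℝ) (ht : t ≤ 0 ∨ 1 ≤ t) : deriv Real.smoothTransition t = 0 := by
  rcases ht with ht | ht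
  · apply IsLocalMin.deriv_eq_zero
    refine Filter.Eventually.of_forall fun s => ?_
    rw [Real.smoothTransition.zero_of_nonpos ht]; exact Real.smoothTransition.nonneg s
  · apply IsLocalMax.deriv_eq_zero
    refine Filter.Eventually.of_forall fun s => ?_
    rw [Real.smoothTransition.one_of_one_le ht]; exact Real.smoothTransition.le_one s

lemma aux_oned (r r' c δ : ℝ) (hr : 0 ≤ r) (hrr : r < r') (hδ : 0 < δ) (hc0 : -r' ≤ c)
    (hc : c ≤ r') (hint : π * r ^ 2 / 2 + 4 * r * δ < ∫ x in (-r')..c, √(r' ^ 2 - x ^ 2)) :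
    ∃ (κ : ℝ × ℝ → ℝ) (g l : ℝ → ℝ → ℝ), ContDiff ℝ (⊤ : ℕ∞) κ ∧
      (∀ t x, (t ≤ 0 ∨ 1 ≤ t) → κ (t, x) = 0) ∧
      (∀ t x, HasDerivAt (fun s => g s x) (κ (t, g t x)) t) ∧
      (∀ t x, HasDerivAt (fun s => l s x)
        (-(deriv (fun w => κ (t, w)) (g t x)) * l t x) t) ∧
      (∀ x, g 0 x = x) ∧ (∀ x, l 0 x = 1) ∧
      (∀ x, |x| ≤ r → g 1 x < c) ∧
      (∀ t x, |x| ≤ r → |g t x| ≤ r') ∧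
      (∀ t x y, |x| ≤ r → |y| ≤ √(r ^ 2 - x ^ 2) →
        |y * l t x| < √(r' ^ 2 - (g t x) ^ 2) + 2 * δ) := by
  obtain ⟨p, hp, hp1, hp2⟩ := aux_smooth_height r' δ hδ
  obtain ⟨q, hq, hq1, hq2⟩ := aux_smooth_height r δ hδ
  obtain ⟨hP, hP'⟩ := aux_primitive p hp (-r')
  obtain ⟨hQ, hQ'⟩ := aux_primitive q hq (-r)
  set P : ℝ → ℝ := fun x => ∫ s in (-r')..x, p s with hPdef
  set Q : ℝ → ℝ := fun x => ∫ s in (-r)..x, q s with hQdef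
  have hpδ : ∀ x, δ ≤ p x := fun x => by
    have := hp1 x; have := Real.sqrt_nonneg (r' ^ 2 - x ^ 2); linarith
  have hqδ : ∀ x, δ ≤ q x := fun x => by
    have := hq1 x; have := Real.sqrt_nonneg (r ^ 2 - x ^ 2); linarith
  have hPm : StrictMono P := strictMono_of_deriv_pos fun x => by
    rw [(hP' x).deriv]; exact hδ.trans_le (hpδ x)
  have hQm : StrictMono Q := strictMono_of_deriv_pos fun x => by
    rw [(hQ' x).deriv]; exact hδ.trans_le (hqδ x)
  have hP0 : P (-r') = 0 := by simp [hPdef]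
  have hQ0 : Q (-r) = 0 := by simp [hQdef]
  have hQr : Q r < P c := by
    have h1 : Q r ≤ ∫ x in (-r)..r, (√(r ^ 2 - x ^ 2) + 2 * δ) :=
      intervalIntegral.integral_mono_on (by linarith) (hq.continuous.intervalIntegrable _ _)
        (Continuous.intervalIntegrable (by fun_prop) _ _) (fun x _ => (hq2 x).le)
    rw [intervalIntegral.integral_add (Continuous.intervalIntegrable (by fun_prop) _ _)
      (by simp), aux_halfdisc r hr] at h1
    simp only [intervalIntegral.integral_const, smul_eq_mul] at h1
    have h2 : ∫ x in (-r')..c, √(r' ^ 2 - x ^ 2) ≤ P c :=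
      intervalIntegral.integral_mono_on hc0 (Continuous.intervalIntegrable (by fun_prop) _ _)
        (hp.continuous.intervalIntegrable _ _) (fun x _ => by linarith [hp1 x])
    linarith
  let σ := Real.smoothTransition
  have hσ : ContDiff ℝ (⊤ : ℕ∞) σ := Real.smoothTransition.contDiff
  have hσd : ContDiff ℝ (⊤ : ℕ∞) (deriv σ) := (contDiff_infty_iff_deriv.1 hσ).2
  have hσ' : ∀ t, HasDerivAt σ (deriv σ t) t := fun t =>
    (hσ.differentiable (by simp)).differentiableAt.hasDerivAt
  have hσ0 : ∀ t, 0 ≤ σ t := Real.smoothTransition.nonneg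
  have hσ1 : ∀ t, σ t ≤ 1 := Real.smoothTransition.le_one
  let M : ℝ × ℝ → ℝ := fun a => (1 - σ a.1) * P a.2 + σ a.1 * Q a.2
  let m : ℝ × ℝ → ℝ := fun a => (1 - σ a.1) * p a.2 + σ a.1 * q a.2
  have hM : ContDiff ℝ (⊤ : ℕ∞) M := by fun_prop
  have hmδ : ∀ a, δ ≤ m a := fun a => by
    have h1 := mul_le_mul_of_nonneg_left (hpδ a.2) (sub_nonneg.2 (hσ1 a.1))
    have h2 := mul_le_mul_of_nonneg_left (hqδ a.2) (hσ0 a.1)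
    show δ ≤ (1 - σ a.1) * p a.2 + σ a.1 * q a.2
    linarith
  have hMm : ∀ t x, HasDerivAt (fun y => M (t, y)) (m (t, x)) x := fun t x =>
    ((hP' x).const_mul (1 - σ t)).add ((hQ' x).const_mul (σ t))
  have hMt : ∀ t x, HasDerivAt (fun s => M (s, x)) (deriv σ t * (Q x - P x)) t := fun t x => by
    have := ((((hσ' t).const_sub 1).mul_const (P x)).add ((hσ' t).mul_const (Q x)))
    convert! this using 1; ring
  have hmt : ∀ t x, HasDerivAt (fun s => m (s, x)) (deriv σ t * (q x - p x)) t := fun t x => by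
    have := ((((hσ' t).const_sub 1).mul_const (p x)).add ((hσ' t).mul_const (q x)))
    convert! this using 1; ring
  obtain ⟨N, hN, hMN, hNM⟩ := aux_inverse M m hM δ hδ hMm hmδ
  obtain ⟨R, hR, hPR, hRP⟩ := aux_inverse (fun a => P a.2) (fun a => p a.2)
    (by fun_prop) δ hδ (fun _ x => hP' x) (fun a => hpδ a.2)
  simp only at hPR hRP
  let g : ℝ → ℝ → ℝ := fun t x => R (0, M (t, x))
  have hPg : ∀ t x, P (g t x) = M (t, x) := fun t x => hPR 0 _
  have hp0 : ∀ x, p x ≠ 0 := fun x => (hδ.trans_le (hpδ x)).ne'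
  have hm0 : ∀ x, m x ≠ 0 := fun x => (hδ.trans_le (hmδ x)).ne'
  have hR' : ∀ w, HasDerivAt (fun u => R (0, u)) (p w)⁻¹ (P w) := fun w => by
    refine HasDerivAt.of_local_left_inverse (f := P) ?_ (by rw [hRP]; exact hP' w) (hp0 w)
      (Filter.Eventually.of_forall fun u => hPR 0 u)
    exact (hR.continuous.comp (by fun_prop : Continuous fun u : ℝ => ((0 : ℝ), u))).continuousAt
  have hN' : ∀ t x, HasDerivAt (fun u => N (t, u)) (m (t, x))⁻¹ (M (t, x)) := fun t x => by
    refine HasDerivAt.of_local_left_inverse (f := fun y => M (t, y)) ?_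
      (by rw [hNM]; exact hMm t x) (hm0 _)
      (Filter.Eventually.of_forall fun u => hMN t u)
    exact (hN.continuous.comp (by fun_prop : Continuous fun u : ℝ => (t, u))).continuousAt
  let κ : ℝ × ℝ → ℝ := fun a =>
    deriv σ a.1 * (Q (N (a.1, P a.2)) - P (N (a.1, P a.2))) / p a.2
  have hgt : ∀ t x, HasDerivAt (fun s => g s x) (deriv σ t * (Q x - P x) / p (g t x)) t := by
    intro t x
    have h1 := hR' (g t x)
    rw [hPg] at h1
    have h2 := h1.comp t (hMt t x)
    convert! h2 using 1
    field_simp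
  have hκg : ∀ t x, κ (t, g t x) = deriv σ t * (Q x - P x) / p (g t x) := by
    intro t x
    simp only [κ, hPg, hNM]
  have hpd : ∀ x, HasDerivAt p (deriv p x) x := fun x =>
    (hp.differentiable (by simp)).differentiableAt.hasDerivAt
  have hκx : ∀ t x, HasDerivAt (fun w => κ (t, w))
      (deriv σ t * ((q x - p x) / m (t, x) - (Q x - P x) * deriv p (g t x) / (p (g t x)) ^ 2))
      (g t x) := by
    intro t x
    have h1 : HasDerivAt (fun w => N (t, P w)) ((m (t, x))⁻¹ * p (g t x)) (g t x) := by
      have h2 := hN' t x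
      rw [← hPg] at h2
      exact h2.comp (g t x) (hP' (g t x))
    have hX : N (t, P (g t x)) = x := by rw [hPg, hNM]
    have hQX := hQ' x
    have hPX := hP' x
    rw [← hX] at hQX hPX
    have h3 := (((hQX.comp (g t x) h1).sub (hPX.comp (g t x) h1)).const_mul (deriv σ t)).div
      (hpd (g t x)) (hp0 _)
    convert! h3 using 1
    simp only [Function.comp, hX, Pi.sub_apply]
    have := hp0 (g t x)
    have := hm0 (t, x)
    field_simp
  have hg0 : ∀ x, g 0 x = x := fun x => by
    have : M (0, x) = P x := by simp [M, σ]
    simp only [g, this, hRP]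
  have hrange : ∀ t x, |x| ≤ r → |g t x| ≤ r' := by
    intro t x hx
    have hx' := abs_le.1 hx
    have h1 : P (-r') ≤ P x := hPm.monotone (by linarith)
    have h2 : P x ≤ P r' := hPm.monotone (by linarith)
    have h3 : Q (-r) ≤ Q x := hQm.monotone (by linarith)
    have h4 : Q x ≤ Q r := hQm.monotone (by linarith)
    have h5 : P c ≤ P r' := hPm.monotone hc
    rw [hP0] at h1
    rw [hQ0] at h3
    have h6 : M (t, x) = (1 - σ t) * P x + σ t * Q x := rfl
    have h7 := sub_nonneg.2 (hσ1 t)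
    have h8 := hσ0 t
    rw [abs_le, ← hPm.le_iff_le, ← hPm.le_iff_le (a := g t x), hPg, hP0, h6]
    constructor
    · positivity
    · have := mul_le_mul_of_nonneg_left h2 h7
      have := mul_le_mul_of_nonneg_left (h4.trans (hQr.le.trans h5)) h8
      linarith
  refine ⟨κ, g, fun t x => p (g t x) / m (t, x), ?_, ?_, ?_, ?_, hg0, ?_, ?_, hrange, ?_⟩
  · refine ContDiff.div ?_ (by fun_prop) (fun x => hp0 _)
    fun_prop
  · intro t x ht
    simp [κ, σ, aux_deriv_transition t ht]
  · intro t x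
    rw [hκg]; exact hgt t x
  · intro t x
    rw [(hκx t x).deriv]
    have h1 := ((hpd (g t x)).comp t (hgt t x)).div (hmt t x) (hm0 _)
    convert! h1 using 1
    simp only [Function.comp]
    have := hp0 (g t x)
    have := hm0 (t, x)
    field_simp
    ring
  · intro x
    have : m (0, x) = p x := by simp [m, σ]
    simp only [this, hg0]
    exact div_self (hp0 x)
  · intro x hx
    have hx' := abs_le.1 hx
    rw [← hPm.lt_iff_lt, hPg]
    have : M (1, x) = Q x := by simp [M, σ]
    rw [this]
    exact (hQm.monotone hx'.2).trans_lt hQr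
  · intro t x y hx hy
    have hpg : 0 < p (g t x) := hδ.trans_le (hpδ _)
    have hmp : 0 < m (t, x) := hδ.trans_le (hmδ _)
    have hmy : |y| ≤ m (t, x) := by
      have h1 : √(r ^ 2 - x ^ 2) ≤ √(r' ^ 2 - x ^ 2) := Real.sqrt_le_sqrt (by nlinarith)
      have h2 : |y| ≤ p x := by linarith [hp1 x]
      have h3 : |y| ≤ q x := by linarith [hq1 x]
      have h4 := mul_le_mul_of_nonneg_left h2 (sub_nonneg.2 (hσ1 t))
      have h5 := mul_le_mul_of_nonneg_left h3 (hσ0 t)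
      show |y| ≤ (1 - σ t) * p x + σ t * q x
      linarith
    have h2 := hp2 (g t x)
    rw [abs_mul, abs_of_pos (div_pos hpg hmp)]
    refine lt_of_le_of_lt ?_ h2
    rw [mul_div_assoc', div_le_iff₀ hmp, mul_comm]
    exact mul_le_mul_of_nonneg_left hmy hpg.le

lemma aux_gradient (k : ℝ → ℝ) (k' : ℝ) (w : ℂ) (hk : HasDerivAt k k' w.re) :
    HasGradientAt (fun z : ℂ => -(k z.re * z.im)) ((-(k' * w.im) : ℝ) + (-(k w.re) : ℝ) * Complex.I) w := by
  rw [hasGradientAt_iff_hasFDerivAt]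
  have h1 : HasFDerivAt (fun z : ℂ => z.re) Complex.reCLM w := Complex.reCLM.hasFDerivAt
  have h2 : HasFDerivAt (fun z : ℂ => z.im) Complex.imCLM w := Complex.imCLM.hasFDerivAt
  have h3 := ((hk.comp_hasFDerivAt w h1).mul h2).neg
  convert! h3 using 1
  ext v
  · simp [Complex.inner, InnerProductSpace.toDual_apply_apply]
    ring

lemma aux_hamiltonian (r r' ρ c : ℝ) (hr : 0 ≤ r) (hrr : r < r') (hρ : r' < ρ) (hc0 : -r' ≤ c)
    (hc : c ≤ r') (hint : π * r ^ 2 / 2 < ∫ x in (-r')..c, √(r' ^ 2 - x ^ 2)) :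
    ∃ (H : ℝ × ℂ → ℝ) (Φ : ℝ → ℂ → ℂ) (ρ₁ : ℝ), ρ₁ < ρ ∧ ContDiff ℝ (⊤ : ℕ∞) H ∧
      (∀ t z, (t ≤ 0 ∨ 1 ≤ t) → H (t, z) = 0) ∧
      (∀ t z, ρ₁ ≤ ‖z‖ → H (t, z) = 0) ∧
      ∀ z, ‖z‖ ≤ r → Φ 0 z = z ∧ (Φ 1 z).re < c ∧
        ∀ t, HasDerivAt (fun s => Φ s z)
          (Complex.I * gradient (fun w => H (t, w)) (Φ t z)) t := by
  obtain ⟨δ, hδ, hδ1, hδ2⟩ : ∃ δ : ℝ, 0 < δ ∧ r' + 3 * δ < ρ ∧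
      π * r ^ 2 / 2 + 4 * r * δ < ∫ x in (-r')..c, √(r' ^ 2 - x ^ 2) := by
    set gap := (∫ x in (-r')..c, √(r' ^ 2 - x ^ 2)) - π * r ^ 2 / 2 with hgap
    have hg : 0 < gap := by linarith
    refine ⟨min ((ρ - r') / 4) (gap / (8 * (r + 1))), ?_, ?_, ?_⟩
    · have : 0 < ρ - r' := by linarith
      positivity
    · have := min_le_left ((ρ - r') / 4) (gap / (8 * (r + 1)))
      linarith
    · have h1 := min_le_right ((ρ - r') / 4) (gap / (8 * (r + 1)))
      have h2 : 4 * r * (gap / (8 * (r + 1))) < gap := by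
        rw [mul_div_assoc', div_lt_iff₀ (by positivity)]
        nlinarith [mul_nonneg hr hg.le]
      have h3 := mul_le_mul_of_nonneg_left h1 (by positivity : 0 ≤ 4 * r)
      linarith
  obtain ⟨κ, g, l, hκ, hκ0, hg, hl, hg0, hl0, hg1, hgr, hy⟩ :=
    aux_oned r r' c δ hr hrr hδ hc0 hc hδ2
  have hr' : 0 < r' := hr.trans_lt hrr
  let χ : ContDiffBump (0 : ℂ) := ⟨r' + 2 * δ, r' + 3 * δ, by positivity, by linarith⟩
  have hχ : ContDiff ℝ (⊤ : ℕ∞) (fun z : ℂ => χ z) := χ.contDiff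
  refine ⟨fun a => χ a.2 * -(κ (a.1, a.2.re) * a.2.im),
    fun t z => (g t z.re : ℂ) + ((z.im * l t z.re : ℝ) : ℂ) * Complex.I, r' + 3 * δ, hδ1,
    ?_, ?_, ?_, ?_⟩
  · have hre : ContDiff ℝ (⊤ : ℕ∞) (fun a : ℝ × ℂ => a.2.re) :=
      Complex.reCLM.contDiff.comp contDiff_snd
    have him : ContDiff ℝ (⊤ : ℕ∞) (fun a : ℝ × ℂ => a.2.im) :=
      Complex.imCLM.contDiff.comp contDiff_snd
    exact (hχ.comp contDiff_snd).mul (((hκ.comp (contDiff_fst.prodMk hre)).mul him).neg)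
  · intro t z ht
    simp [hκ0 t _ ht]
  · intro t z hz
    have : χ z = 0 := χ.zero_of_le_dist (by simpa using hz)
    simp [this]
  · intro z hz
    have hre : |z.re| ≤ r := (Complex.abs_re_le_norm z).trans hz
    have him : |z.im| ≤ √(r ^ 2 - z.re ^ 2) := by
      apply Real.abs_le_sqrt
      have h1 : z.re ^ 2 + z.im ^ 2 = ‖z‖ ^ 2 := by
        rw [← Complex.normSq_eq_norm_sq, Complex.normSq_apply]; ring
      nlinarith [norm_nonneg z]
    refine ⟨?_, ?_, fun t => ?_⟩
    · simp only
      rw [hg0, hl0, mul_one, Complex.re_add_im]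
    · simpa using hg1 _ hre
    · set w : ℂ := (g t z.re : ℂ) + ((z.im * l t z.re : ℝ) : ℂ) * Complex.I with hw
      have hwre : w.re = g t z.re := by simp [hw]
      have hwim : w.im = z.im * l t z.re := by simp [hw]
      have hwn : ‖w‖ < r' + 2 * δ := by
        have h1 := hy t z.re z.im hre him
        have h2 := abs_le.1 (hgr t _ hre)
        rw [← hwim, ← hwre] at h1
        rw [← hwre] at h2
        have h3 : w.re ^ 2 + w.im ^ 2 = ‖w‖ ^ 2 := by
          rw [← Complex.normSq_eq_norm_sq, Complex.normSq_apply]; ring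
        have h4 : 0 ≤ r' ^ 2 - w.re ^ 2 := by nlinarith
        have h5 := Real.sq_sqrt h4
        have h6 : √(r' ^ 2 - w.re ^ 2) ≤ r' := Real.sqrt_le_iff.2 ⟨hr'.le, by nlinarith⟩
        have h7 := Real.sqrt_nonneg (r' ^ 2 - w.re ^ 2)
        have h8 : w.im ^ 2 < (√(r' ^ 2 - w.re ^ 2) + 2 * δ) ^ 2 := by
          rw [← sq_abs w.im]
          exact pow_lt_pow_left₀ h1 (abs_nonneg _) (by norm_num)
        apply lt_of_pow_lt_pow_left₀ 2 (by positivity)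
        nlinarith
      have hkd : HasDerivAt (fun x => κ (t, x)) (deriv (fun x => κ (t, x)) w.re) w.re := by
        have : ContDiff ℝ (⊤ : ℕ∞) (fun x => κ (t, x)) := by fun_prop
        exact (this.differentiable (by simp)).differentiableAt.hasDerivAt
      have hgrad : gradient (fun w : ℂ => χ w * -(κ (t, w.re) * w.im)) w =
          ((-(deriv (fun x => κ (t, x)) w.re * w.im) : ℝ) + (-(κ (t, w.re)) : ℝ) * Complex.I) := by
        refine HasGradientAt.gradient ((aux_gradient (fun x => κ (t, x)) _ w hkd).congr_of_eventuallyEq ?_)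
        have hopen : Metric.ball (0 : ℂ) (r' + 2 * δ) ∈ nhds w :=
          Metric.isOpen_ball.mem_nhds (by simpa using hwn)
        filter_upwards [hopen] with v hv
        have : χ v = 1 := χ.one_of_mem_closedBall (Metric.ball_subset_closedBall hv)
        simp [this]
      simp only
      rw [hgrad]
      have h1 := (hg t z.re).ofReal_comp
      have h2 := (((hl t z.re).const_mul z.im).ofReal_comp).mul_const Complex.I
      have h3 := h1.add h2
      convert! h3 using 1
      rw [← hwre]
      apply Complex.ext
      · simp
      · simp [hwim]
        ring

lemma aux_gradient_scale (h : ℂ → ℝ) (a b : ℝ) (w : ℂ) (hh : Differentiable ℝ h) :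
    gradient (fun v => a * h (b • v)) w = (a * b) • gradient h (b • w) := by
  apply HasGradientAt.gradient
  rw [hasGradientAt_iff_hasFDerivAt]
  have h1 : HasFDerivAt h (fderiv ℝ h (b • w)) (b • w) := hh.differentiableAt.hasFDerivAt
  have h2 : HasFDerivAt (fun v : ℂ => b • v) (b • ContinuousLinearMap.id ℝ ℂ) w :=
    (hasFDerivAt_id w).const_smul b
  have h3 := (h1.comp w h2).const_mul a
  convert! h3 using 1
  rw [map_smulₛₗ, toDual_gradient]
  ext; simp; ring

lemma aux_flow (F : ℝ × ℂ → ℝ) (hF : ContDiff ℝ (⊤ : ℕ∞) F) (hFc : HasCompactSupport F) :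
    ∃ (K : NNReal) (b : ℝ → ℂ → ℂ),
      (∀ t, LipschitzWith K (fun z => Complex.I * gradient (fun w => F (t, w)) z)) ∧
      b 0 = id ∧ ∀ (z : ℂ) (t : ℝ),
        HasDerivAt (fun s => b s z) (Complex.I * gradient (fun w => F (t, w)) (b t z)) t := by
  let T : (ℝ × ℂ →L[ℝ] ℝ) →L[ℝ] (ℂ →L[ℝ] ℝ) :=
    (ContinuousLinearMap.compL ℝ ℂ (ℝ × ℂ) ℝ).flip (ContinuousLinearMap.inr ℝ ℝ ℂ)
  let X : ℝ × ℂ → ℂ := fun a =>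
    Complex.I * (InnerProductSpace.toDual ℝ ℂ).symm (T (fderiv ℝ F a))
  have hX : ∀ t z, X (t, z) = Complex.I * gradient (fun w => F (t, w)) z := by
    intro t z
    have h1 : HasFDerivAt F (fderiv ℝ F (t, z)) (t, z) :=
      (hF.differentiable (by simp)).differentiableAt.hasFDerivAt
    have h2 : HasFDerivAt (fun w : ℂ => (t, w)) (ContinuousLinearMap.inr ℝ ℝ ℂ) z :=
      hasFDerivAt_prodMk_right t z
    have h3 := (h1.comp z h2).fderiv
    simp only [X, gradient]
    rw [show (fun w => F (t, w)) = F ∘ (fun w : ℂ => (t, w)) from rfl, h3]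
    rfl
  have hXs : ContDiff ℝ 1 X := by
    have h1 : ContDiff ℝ 1 (fderiv ℝ F) := hF.fderiv_right (by norm_cast)
    have h2 : ContDiff ℝ 1 (fun a => (InnerProductSpace.toDual ℝ ℂ).symm (T (fderiv ℝ F a))) :=
      (InnerProductSpace.toDual ℝ ℂ).symm.contDiff.comp (T.contDiff.comp h1)
    exact contDiff_const.mul h2
  have hXc : HasCompactSupport X := by
    have := (hFc.fderiv (𝕜 := ℝ)).comp_left
      (g := fun A => Complex.I * (InnerProductSpace.toDual ℝ ℂ).symm (T A)) (by simp)
    exact this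
  obtain ⟨K, hK⟩ := ContDiff.lipschitzWith_of_hasCompactSupport hXc hXs (by simp)
  obtain ⟨L, hL⟩ := hXc.exists_bound_of_continuous hXs.continuous
  have hL' : ∀ p, ‖X p‖ ≤ (L.toNNReal : ℝ) := fun p =>
    (hL p).trans (Real.le_coe_toNNReal L)
  choose b hb0 hb using fun z => aux_ode_global X K L.toNNReal hK hL' z
  refine ⟨K, fun t z => b z t, fun t => ?_, ?_, ?_⟩
  · have := hK.comp (LipschitzWith.prodMk_left (α := ℝ) (β := ℂ) t)
    rw [mul_one] at this
    simp_rw [← hX]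
    exact this
  · ext z; simp [hb0]
  · intro z t
    rw [← hX]; exact hb z t

lemma aux_cut (r' T : ℝ) (hr' : 0 ≤ r') (hT0 : 0 ≤ T) (hT : T ≤ π * r' ^ 2 / 2) :
    ∃ c, -r' ≤ c ∧ c ≤ r' ∧ ∫ x in (-r')..c, √(r' ^ 2 - x ^ 2) = T ∧
      ∫ x in (-r')..(-c), √(r' ^ 2 - x ^ 2) = π * r' ^ 2 / 2 - T := by
  have hi : ∀ a b, IntervalIntegrable (fun x : ℝ => √(r' ^ 2 - x ^ 2)) MeasureTheory.volume a b :=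
    fun a b => Continuous.intervalIntegrable (by fun_prop) _ _
  have hcont : Continuous (fun c => ∫ x in (-r')..c, √(r' ^ 2 - x ^ 2)) :=
    intervalIntegral.continuous_primitive hi _
  have h := intermediate_value_Icc (by linarith : -r' ≤ r') hcont.continuousOn
  obtain ⟨c, hc, hcT⟩ := h (show T ∈ _ by
    simp only [intervalIntegral.integral_same, aux_halfdisc r' hr']; exact ⟨hT0, hT⟩)
  refine ⟨c, hc.1, hc.2, hcT, ?_⟩
  have h1 := intervalIntegral.integral_comp_neg (a := c) (b := r') (fun x => √(r' ^ 2 - x ^ 2))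
  simp only [neg_sq] at h1
  have h2 := intervalIntegral.integral_add_adjacent_intervals (hi (-r') c) (hi c r')
  rw [aux_halfdisc r' hr'] at h2
  simp only at hcT
  linarith

theorem stmt_4 (A ε : ℝ) (hA : 0 ≤ A) (hε0 : 0 < ε) (hε1 : ε < 1) :
    ∃ (F : ℝ × ℂ → ℝ) (b : ℝ → ℂ → ℂ),
      ContDiff ℝ (⊤ : ℕ∞) F ∧
      (∀ (t : ℝ) (z : ℂ), 1 + A + ε ≤ π * ‖z‖ ^ 2 → F (t, z) = 0) ∧
      b 0 = id ∧
      (∀ (z : ℂ) (t : ℝ),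
        HasDerivAt (fun s => b s z) (Complex.I * gradient (fun w => F (t, w)) (b t z)) t) ∧
      b 1 '' {z : ℂ | π * ‖z‖ ^ 2 ≤ 1} ⊆
        {z : ℂ | A < π * ‖z‖ ^ 2 ∧ π * ‖z‖ ^ 2 < 1 + A + ε} := by
  have hπ := Real.pi_pos
  have hsq : ∀ a : ℝ, 0 ≤ a → π * √(a / π) ^ 2 = a := fun a ha => by
    rw [Real.sq_sqrt (by positivity)]; field_simp
  have hle : ∀ (a : ℝ) (z : ℂ), 0 ≤ a → (π * ‖z‖ ^ 2 ≤ a ↔ ‖z‖ ≤ √(a / π)) := fun a z ha => by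
    rw [Real.le_sqrt (norm_nonneg z) (by positivity), le_div_iff₀ hπ, mul_comm]
  have hge : ∀ (a : ℝ) (z : ℂ), 0 ≤ a → (a ≤ π * ‖z‖ ^ 2 ↔ √(a / π) ≤ ‖z‖) := fun a z ha => by
    rw [Real.sqrt_le_left (norm_nonneg z), div_le_iff₀ hπ, mul_comm]
  have hlt : ∀ a b : ℝ, 0 ≤ a → a < b → √(a / π) < √(b / π) := fun a b ha hab =>
    Real.sqrt_lt_sqrt (by positivity) (by gcongr)
  set r' := √((1 + A + ε / 2) / π) with hr'
  set ρ := √((1 + A + ε) / π) with hρ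
  have hr'sq : π * r' ^ 2 = 1 + A + ε / 2 := hsq _ (by positivity)
  have hr'ρ : r' < ρ := hlt _ _ (by positivity) (by linarith)
  obtain ⟨c, hc0, hc1, hcT, hcT'⟩ := aux_cut r' ((1 + ε / 4) / 2) (Real.sqrt_nonneg _)
    (by positivity) (by rw [hr'sq]; linarith)
  obtain ⟨H₁, Φ₁, ρ₁, hρ₁, hH₁, hH₁t, hH₁z, hΦ₁⟩ := aux_hamiltonian (√(1 / π)) r' ρ c
    (Real.sqrt_nonneg _) (hlt _ _ (by positivity) (by linarith)) hr'ρ hc0 hc1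
    (by rw [hcT, hsq _ zero_le_one]; linarith)
  obtain ⟨H₂, Φ₂, ρ₂, hρ₂, hH₂, hH₂t, hH₂z, hΦ₂⟩ := aux_hamiltonian (√(A / π)) r' ρ (-c)
    (Real.sqrt_nonneg _) (hlt _ _ hA (by linarith)) hr'ρ (by linarith) (by linarith)
    (by rw [hcT', hsq _ hA, hr'sq]; linarith)
  let F : ℝ × ℂ → ℝ := fun a =>
    2 * H₁ (2 * a.1, (1 : ℝ) • a.2) + (-2) * H₂ (2 - 2 * a.1, (-1 : ℝ) • a.2)
  have hF : ContDiff ℝ (⊤ : ℕ∞) F := by fun_prop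
  have hFz : ∀ t z, max ρ₁ ρ₂ ≤ ‖z‖ → F (t, z) = 0 := by
    intro t z hz
    have h1 := hH₁z (2 * t) ((1 : ℝ) • z) (by simpa using (le_max_left _ _).trans hz)
    have h2 := hH₂z (2 - 2 * t) ((-1 : ℝ) • z) (by simpa using (le_max_right _ _).trans hz)
    simp only [F, h1, h2]; ring
  have hFle : ∀ t z, t ≤ 1 / 2 → F (t, z) = 2 * H₁ (2 * t, (1 : ℝ) • z) := by
    intro t z ht
    simp only [F]
    rw [hH₂t (2 - 2 * t) _ (Or.inr (by linarith))]; ring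
  have hFge : ∀ t z, 1 / 2 ≤ t → F (t, z) = (-2) * H₂ (2 - 2 * t, (-1 : ℝ) • z) := by
    intro t z ht
    simp only [F]
    rw [hH₁t (2 * t) _ (Or.inr (by linarith))]; ring
  have hFt : ∀ t z, t ∉ Set.Icc (0 : ℝ) 1 → F (t, z) = 0 := by
    intro t z ht
    rw [Set.mem_Icc, not_and_or, not_le, not_le] at ht
    simp only [F]
    rcases ht with ht | ht
    · rw [hH₁t (2 * t) _ (Or.inl (by linarith)), hH₂t (2 - 2 * t) _ (Or.inr (by linarith))]; ring
    · rw [hH₁t (2 * t) _ (Or.inr (by linarith)), hH₂t (2 - 2 * t) _ (Or.inl (by linarith))]; ring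
  have hFc : HasCompactSupport F := by
    refine HasCompactSupport.intro (K := Set.Icc (0 : ℝ) 1 ×ˢ Metric.closedBall (0 : ℂ) ρ)
      (isCompact_Icc.prod (isCompact_closedBall _ _)) ?_
    rintro ⟨t, z⟩ hz
    rw [Set.mem_prod, not_and_or] at hz
    rcases hz with hz | hz
    · exact hFt t z hz
    · refine hFz t z ?_
      simp only [Metric.mem_closedBall, dist_zero_right, not_le] at hz
      exact max_le (by linarith) (by linarith)
  obtain ⟨K, b, hK, hb0, hb⟩ := aux_flow F hF hFc
  have hd₁ : ∀ t, Differentiable ℝ (fun w => H₁ (t, w)) := fun t =>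
    ((by fun_prop : ContDiff ℝ (⊤ : ℕ∞) (fun w => H₁ (t, w)))).differentiable (by simp)
  have hd₂ : ∀ t, Differentiable ℝ (fun w => H₂ (t, w)) := fun t =>
    ((by fun_prop : ContDiff ℝ (⊤ : ℕ∞) (fun w => H₂ (t, w)))).differentiable (by simp)
  have hgle : ∀ t w, t ≤ 1 / 2 → gradient (fun w => F (t, w)) w =
      (2 : ℝ) • gradient (fun w => H₁ (2 * t, w)) w := by
    intro t w ht
    simp_rw [hFle t _ ht]
    have := aux_gradient_scale (fun w => H₁ (2 * t, w)) 2 1 w (hd₁ _)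
    simpa using this
  have hgge : ∀ t w, 1 / 2 ≤ t → gradient (fun w => F (t, w)) (-w) =
      (2 : ℝ) • gradient (fun w => H₂ (2 - 2 * t, w)) w := by
    intro t w ht
    simp_rw [hFge t _ ht]
    have := aux_gradient_scale (fun w => H₂ (2 - 2 * t, w)) (-2) (-1) (-w) (hd₂ _)
    simpa using this
  have hg0 : ∀ t w, ρ ≤ ‖w‖ → gradient (fun w => F (t, w)) w = 0 := by
    intro t w hw
    apply HasGradientAt.gradient
    refine (hasGradientAt_const w (0 : ℝ)).congr_of_eventuallyEq ?_
    have : ∀ᶠ v in nhds w, max ρ₁ ρ₂ < ‖v‖ :=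
      continuous_norm.continuousAt.eventually (lt_mem_nhds ((max_lt hρ₁ hρ₂).trans_le hw))
    filter_upwards [this] with v hv using hFz t v hv.le
  have hbc : ∀ z, Continuous (fun s => b s z) := fun z =>
    continuous_iff_continuousAt.2 fun t => (hb z t).continuousAt
  refine ⟨F, b, hF, fun t z hz => ?_, hb0, hb, ?_⟩
  · have h1 : ρ ≤ ‖z‖ := (hge _ z (by positivity)).1 hz
    exact hFz t z (max_le (by linarith) (by linarith))
  rintro _ ⟨z, hz, rfl⟩
  have hz1 : ‖z‖ ≤ √(1 / π) := (hle 1 z zero_le_one).1 hz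
  constructor
  · by_contra hcon
    have hζ : ‖b 1 z‖ ≤ √(A / π) := (hle A _ hA).1 (not_lt.1 hcon)
    obtain ⟨h10, h11, h1d⟩ := hΦ₁ z hz1
    obtain ⟨h20, h21, h2d⟩ := hΦ₂ (-(b 1 z)) (by simpa using hζ)
    have hd1 : ∀ t, t ≤ 1 / 2 → HasDerivAt (fun s => Φ₁ (2 * s) z)
        (Complex.I * gradient (fun w => F (t, w)) (Φ₁ (2 * t) z)) t := by
      intro t ht
      rw [hgle t _ ht]
      have := (h1d (2 * t)).scomp t ((hasDerivAt_id t).const_mul 2)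
      convert! this using 1
      simp; ring
    have hd2 : ∀ t, 1 / 2 ≤ t → HasDerivAt (fun s => -Φ₂ (2 - 2 * s) (-(b 1 z)))
        (Complex.I * gradient (fun w => F (t, w)) (-Φ₂ (2 - 2 * t) (-(b 1 z)))) t := by
      intro t ht
      rw [hgge t _ ht]
      have := ((h2d (2 - 2 * t)).scomp t (((hasDerivAt_id t).const_mul 2).const_sub 2)).neg
      convert! this using 1
      simp; ring
    have hc1 : Continuous (fun s => Φ₁ (2 * s) z) :=
      (continuous_iff_continuousAt.2 fun t => (h1d t).continuousAt).comp (by fun_prop)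
    have hc2 : Continuous (fun s => -Φ₂ (2 - 2 * s) (-(b 1 z))) :=
      ((continuous_iff_continuousAt.2 fun t => (h2d t).continuousAt).comp
        (by fun_prop : Continuous fun s : ℝ => 2 - 2 * s)).neg
    have e1 := ODE_solution_unique_of_mem_Icc_right (a := 0) (b := 1 / 2) (s := fun _ => Set.univ)
      (v := fun t w => Complex.I * gradient (fun w => F (t, w)) w)
      (fun t _ => (hK t).lipschitzOnWith) (hbc z).continuousOn
      (fun t _ => (hb z t).hasDerivWithinAt) (fun _ _ => trivial) hc1.continuousOn
      (fun t ht => (hd1 t ht.2.le).hasDerivWithinAt) (fun _ _ => trivial)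
      (by simp [hb0, h10])
    have e2 := ODE_solution_unique_of_mem_Icc_left (a := 1 / 2) (b := 1) (s := fun _ => Set.univ)
      (v := fun t w => Complex.I * gradient (fun w => F (t, w)) w)
      (fun t _ => (hK t).lipschitzOnWith) (hbc z).continuousOn
      (fun t _ => (hb z t).hasDerivWithinAt) (fun _ _ => trivial) hc2.continuousOn
      (fun t ht => (hd2 t ht.1.le).hasDerivWithinAt) (fun _ _ => trivial)
      (by simp [h20])
    have e1' := e1 (x := 1 / 2) ⟨by norm_num, le_rfl⟩
    have e2' := e2 (x := 1 / 2) ⟨le_rfl, by norm_num⟩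
    norm_num at e1' e2'
    rw [e1'] at e2'
    have := congrArg Complex.re e2'
    rw [Complex.neg_re] at this
    linarith
  · by_contra hcon
    have hζ : ρ ≤ ‖b 1 z‖ := (hge _ _ (by positivity)).1 (not_lt.1 hcon)
    have e := ODE_solution_unique_of_mem_Icc_left (a := 0) (b := 1) (s := fun _ => Set.univ)
      (f := fun s => b s z) (g := fun _ => b 1 z)
      (v := fun t w => Complex.I * gradient (fun w => F (t, w)) w)
      (fun t _ => (hK t).lipschitzOnWith) (hbc z).continuousOn
      (fun t _ => (hb z t).hasDerivWithinAt) (fun _ _ => trivial) continuousOn_const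
      (fun t ht => by simp only [hg0 t _ hζ, mul_zero]; exact hasDerivWithinAt_const _ _ _)
      (fun _ _ => trivial) rfl
    have e0 := e (x := 0) ⟨le_rfl, zero_le_one⟩
    simp only [hb0, id] at e0
    rw [← e0] at hζ
    have := hlt 1 (1 + A + ε) zero_le_one (by linarith)
    linarith
end

section
/- Let m ≥ 1, let c₁, …, c_m be positive reals, and define N : ℂᵐ → ℝ by N(w) = π·Σⱼ cⱼ|wⱼ|². Let A₁, A₂ : ℝ → ℝ be smooth functions such that the set C := {x ∈ ℝ : x ≥ 0, A₁(x) ≥ 0 and A₂(x) ≥ 0} is compact. Let U be an open subset of ℂ × ℂᵐ containing the (compact) set {(z, w) : N(w) ∈ C and π|z|² ≤ A₁(N(w)) + A₂(N(w))}. Then there exist a smooth time-dependent function G : ℝ × (ℂ × ℂᵐ) → ℝ and a compact set K ⊆ U with G t = 0 outside K for every t, together with a Hamiltonian flow b of G with b 0 = id, such that: (i) N(w-component of b t (z, w)) = N(w) for all t, z, w (the flow preserves the function (z, w) ↦ N(w)); and (ii) the image under b 1 of the set {(z, w) : π|z|² ≤ A₁(N(w))} is disjoint from the set {(z, w) : π|z|²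 ≤ A₂(N(w))}. -/
open Real

/-- soft positive part -/
noncomputable def dspSp (ε a : ℝ) : ℝ := (a + √(a ^ 2 + ε ^ 2)) / 2

lemma dspSp_gt {ε : ℝ} (hε : 0 < ε) (a : ℝ) : a < dspSp ε a := by
  have : |a| < √(a ^ 2 + ε ^ 2) := by
    rw [← Real.sqrt_sq_eq_abs]
    apply Real.sqrt_lt_sqrt (by positivity)
    have := pow_pos hε 2
    linarith
  have := le_abs_self a
  unfold dspSp
  linarith

lemma dspSp_pos {ε : ℝ} (hε : 0 < ε) (a : ℝ) : 0 < dspSp ε a := by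
  have : |a| < √(a ^ 2 + ε ^ 2) := by
    rw [← Real.sqrt_sq_eq_abs]
    apply Real.sqrt_lt_sqrt (by positivity)
    have := pow_pos hε 2
    linarith
  have := neg_abs_le a
  unfold dspSp
  linarith

lemma dspSp_le {ε : ℝ} (hε : 0 < ε) (a : ℝ) : dspSp ε a ≤ max a 0 + ε / 2 := by
  have h1 : √(a ^ 2 + ε ^ 2) ≤ |a| + ε := by
    apply Real.sqrt_le_iff.2
    refine ⟨by positivity, ?_⟩
    have := mul_nonneg (abs_nonneg a) hε.le
    nlinarith [sq_abs a]
  unfold dspSp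
  rcases le_total 0 a with h | h
  · rw [max_eq_left h]; rw [abs_of_nonneg h] at h1; linarith
  · rw [max_eq_right h]; rw [abs_of_nonpos h] at h1; linarith

lemma dspSp_contDiff {ε : ℝ} (hε : 0 < ε) : ContDiff ℝ (⊤ : ℕ∞) (dspSp ε) := by
  unfold dspSp
  have : ContDiff ℝ (⊤ : ℕ∞) (fun a : ℝ => √(a ^ 2 + ε ^ 2)) := by
    apply ContDiff.sqrt
    · fun_prop
    · intro x; positivity
  fun_prop

noncomputable def dspEta (δ x : ℝ) : ℝ := √(dspSp δ (1 - x ^ 2))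

lemma dspEta_pos {δ : ℝ} (hδ : 0 < δ) (x : ℝ) : 0 < dspEta δ x :=
  Real.sqrt_pos.2 (dspSp_pos hδ _)

lemma dspEta_contDiff {δ : ℝ} (hδ : 0 < δ) : ContDiff ℝ (⊤ : ℕ∞) (dspEta δ) := by
  unfold dspEta
  apply ContDiff.sqrt
  · exact (dspSp_contDiff hδ).comp (by fun_prop)
  · intro x; exact (dspSp_pos hδ _).ne'

noncomputable def dspTheta (δ x : ℝ) : ℝ := ∫ s in (0 : ℝ)..x, dspEta δ s

lemma dspTheta_hasDerivAt {δ : ℝ} (hδ : 0 < δ) (x : ℝ) :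
    HasDerivAt (dspTheta δ) (dspEta δ x) x := by
  have hc := (dspEta_contDiff hδ).continuous
  exact intervalIntegral.integral_hasDerivAt_right (hc.intervalIntegrable _ _)
    (hc.stronglyMeasurableAtFilter _ _) hc.continuousAt

lemma dspTheta_contDiff {δ : ℝ} (hδ : 0 < δ) : ContDiff ℝ (⊤ : ℕ∞) (dspTheta δ) := by
  rw [contDiff_infty_iff_deriv]
  refine ⟨fun x => (dspTheta_hasDerivAt hδ x).differentiableAt, ?_⟩
  have : deriv (dspTheta δ) = dspEta δ := funext fun x => (dspTheta_hasDerivAt hδ x).deriv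
  rw [this]
  exact dspEta_contDiff hδ

lemma dspTheta_strictMono {δ : ℝ} (hδ : 0 < δ) : StrictMono (dspTheta δ) := by
  apply strictMono_of_deriv_pos
  intro x
  rw [(dspTheta_hasDerivAt hδ x).deriv]
  exact dspEta_pos hδ x

lemma dspTheta_neg (δ x : ℝ) : dspTheta δ (-x) = - dspTheta δ x := by
  unfold dspTheta
  have h := intervalIntegral.integral_comp_neg (a := 0) (b := x) (f := dspEta δ)
  have h2 : (fun s => dspEta δ (-s)) = dspEta δ := by
    funext s; simp [dspEta]
  rw [h2] at h
  rw [h, neg_zero, intervalIntegral.integral_symm]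

lemma dspEta_sq {δ : ℝ} (hδ : 0 < δ) (x : ℝ) : dspEta δ x ^ 2 = dspSp δ (1 - x ^ 2) :=
  Real.sq_sqrt (dspSp_pos hδ _).le

/-- the scaled half height dominates the disc of radius `r` -/
lemma dspEta_lower {δ r u v : ℝ} (hδ : 0 < δ) (hr : 0 < r) (h : u ^ 2 + v ^ 2 < r ^ 2) :
    |v| < r * dspEta δ (u / r) := by
  have hp := dspEta_pos hδ (u / r)
  apply abs_lt_of_sq_lt_sq _ (by positivity)
  rw [mul_pow, dspEta_sq hδ]
  have := dspSp_gt hδ (1 - (u / r) ^ 2)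
  have h2 : r ^ 2 * (1 - (u / r) ^ 2) = r ^ 2 - u ^ 2 := by field_simp
  have h3 : 0 < r ^ 2 := by positivity
  nlinarith

lemma dspEta_upper {δ r ρ u : ℝ} (hδ : 0 < δ) (hr : 0 < r) (hrρ : r ≤ ρ) (hu : |u| ≤ ρ) :
    r * dspEta δ (u / r) ≤ √(ρ ^ 2 - u ^ 2 + ρ ^ 2 * (δ / 2)) := by
  apply Real.le_sqrt_of_sq_le
  rw [mul_pow, dspEta_sq hδ]
  have h1 := dspSp_le hδ (1 - (u / r) ^ 2)
  have h2 : r ^ 2 * (1 - (u / r) ^ 2) = r ^ 2 - u ^ 2 := by field_simp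
  have h3 : 0 < r ^ 2 := by positivity
  have h4 : r ^ 2 ≤ ρ ^ 2 := by gcongr
  have h5 : u ^ 2 ≤ ρ ^ 2 := by rw [← sq_abs u]; gcongr
  have h6 : r ^ 2 * max (1 - (u / r) ^ 2) 0 ≤ ρ ^ 2 - u ^ 2 := by
    rcases max_choice (1 - (u / r) ^ 2) 0 with h | h <;> rw [h]
    · linarith
    · linarith
  have h7 : r ^ 2 * (δ / 2) ≤ ρ ^ 2 * (δ / 2) := by gcongr
  calc r ^ 2 * dspSp δ (1 - (u / r) ^ 2) ≤ r ^ 2 * (max (1 - (u / r) ^ 2) 0 + δ / 2) := by gcongr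
    _ ≤ _ := by rw [mul_add]; linarith

noncomputable def dspS (δ r u : ℝ) : ℝ := r ^ 2 * dspTheta δ (u / r)
noncomputable def dspS1 (δ r u : ℝ) : ℝ := r * dspEta δ (u / r)
noncomputable def dspS2 (δ r u : ℝ) : ℝ := deriv (dspEta δ) (u / r)

lemma dspS_hasDerivAt {δ r : ℝ} (hδ : 0 < δ) (hr : 0 < r) (u : ℝ) :
    HasDerivAt (dspS δ r) (dspS1 δ r u) u := by
  unfold dspS dspS1
  have := ((dspTheta_hasDerivAt hδ (u / r)).comp u ((hasDerivAt_id u).div_const r)).const_mul (r ^ 2)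
  refine this.congr_deriv ?_
  field_simp

lemma dspS1_hasDerivAt {δ r : ℝ} (hδ : 0 < δ) (hr : 0 < r) (u : ℝ) :
    HasDerivAt (dspS1 δ r) (dspS2 δ r u) u := by
  unfold dspS1 dspS2
  have h0 : HasDerivAt (dspEta δ) (deriv (dspEta δ) (u / r)) (u / r) :=
    (((dspEta_contDiff hδ).differentiable (by simp)) _).hasDerivAt
  have := (h0.comp u ((hasDerivAt_id u).div_const r)).const_mul r
  refine this.congr_deriv ?_
  field_simp

noncomputable def dspAl (t : ℝ) : ℝ := Real.smoothTransition (1 - 2 * t)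
noncomputable def dspOm (t : ℝ) : ℝ := Real.smoothTransition (2 * t - 1)

lemma dspAl_contDiff : ContDiff ℝ (⊤ : ℕ∞) dspAl :=
  Real.smoothTransition.contDiff.comp (by fun_prop)
lemma dspOm_contDiff : ContDiff ℝ (⊤ : ℕ∞) dspOm :=
  Real.smoothTransition.contDiff.comp (by fun_prop)
lemma dspAl_hasDerivAt (t : ℝ) : HasDerivAt dspAl (deriv dspAl t) t :=
  ((dspAl_contDiff.differentiable (by simp)) t).hasDerivAt
lemma dspOm_hasDerivAt (t : ℝ) : HasDerivAt dspOm (deriv dspOm t) t :=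
  ((dspOm_contDiff.differentiable (by simp)) t).hasDerivAt

lemma dspAl_deriv_zero {t : ℝ} (ht : t ∉ Set.Icc (0 : ℝ) 1) : deriv dspAl t = 0 := by
  rw [Set.mem_Icc, not_and_or, not_le, not_le] at ht
  rcases ht with ht | ht
  · have : dspAl =ᶠ[nhds t] fun _ => 1 := by
      filter_upwards [Iio_mem_nhds ht] with s hs
      exact Real.smoothTransition.one_of_one_le (by have := Set.mem_Iio.1 hs; linarith)
    rw [this.deriv_eq]; simp
  · have : dspAl =ᶠ[nhds t] fun _ => 0 := by
      filter_upwards [Ioi_mem_nhds ht] with s hs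
      exact Real.smoothTransition.zero_of_nonpos (by have := Set.mem_Ioi.1 hs; linarith)
    rw [this.deriv_eq]; simp

lemma dspOm_deriv_zero {t : ℝ} (ht : t ∉ Set.Icc (0 : ℝ) 1) : deriv dspOm t = 0 := by
  rw [Set.mem_Icc, not_and_or, not_le, not_le] at ht
  rcases ht with ht | ht
  · have : dspOm =ᶠ[nhds t] fun _ => 0 := by
      filter_upwards [Iio_mem_nhds ht] with s hs
      exact Real.smoothTransition.zero_of_nonpos (by have := Set.mem_Iio.1 hs; linarith)
    rw [this.deriv_eq]; simp
  · have : dspOm =ᶠ[nhds t] fun _ => 1 := by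
      filter_upwards [Ioi_mem_nhds ht] with s hs
      exact Real.smoothTransition.one_of_one_le (by have := Set.mem_Ioi.1 hs; linarith)
    rw [this.deriv_eq]; simp

lemma dspAl_nonneg (t : ℝ) : 0 ≤ dspAl t := Real.smoothTransition.nonneg _
lemma dspOm_nonneg (t : ℝ) : 0 ≤ dspOm t := Real.smoothTransition.nonneg _
lemma dspAl_half {t : ℝ} (h : 1 / 2 ≤ t) : dspAl t = 0 :=
  Real.smoothTransition.zero_of_nonpos (by linarith)
lemma dspOm_half {t : ℝ} (h : t ≤ 1 / 2) : dspOm t = 0 :=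
  Real.smoothTransition.zero_of_nonpos (by linarith)
lemma dspAl_le (t : ℝ) : dspAl t ≤ 1 := Real.smoothTransition.le_one _
lemma dspOm_le (t : ℝ) : dspOm t ≤ 1 := Real.smoothTransition.le_one _
lemma dspAl_zero : dspAl 0 = 1 := Real.smoothTransition.one_of_one_le (by norm_num)
lemma dspOm_one : dspOm 1 = 1 := Real.smoothTransition.one_of_one_le (by norm_num)
lemma dsp_sum_le (t : ℝ) : 0 ≤ 1 - dspAl t - dspOm t := by
  rcases le_total t (1 / 2) with h | h
  · rw [dspOm_half h]; linarith [dspAl_le t]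
  · rw [dspAl_half h]; linarith [dspOm_le t]

noncomputable def dspQ (δ r₁ r₂ ρ t u : ℝ) : ℝ :=
  dspAl t * dspS δ r₁ u
    + dspOm t * (dspS δ r₂ u - r₁ ^ 2 * dspTheta δ 1 - r₂ ^ 2 * dspTheta δ 1)
    + (1 - dspAl t - dspOm t) * (dspS δ ρ u - r₂ ^ 2 * dspTheta δ 1)

noncomputable def dspQt (δ r₁ r₂ ρ t u : ℝ) : ℝ :=
  deriv dspAl t * dspS δ r₁ u
    + deriv dspOm t * (dspS δ r₂ u - r₁ ^ 2 * dspTheta δ 1 - r₂ ^ 2 * dspTheta δ 1)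
    + (- deriv dspAl t - deriv dspOm t) * (dspS δ ρ u - r₂ ^ 2 * dspTheta δ 1)

noncomputable def dspQu (δ r₁ r₂ ρ t u : ℝ) : ℝ :=
  dspAl t * dspS1 δ r₁ u + dspOm t * dspS1 δ r₂ u + (1 - dspAl t - dspOm t) * dspS1 δ ρ u

noncomputable def dspQtu (δ r₁ r₂ ρ t u : ℝ) : ℝ :=
  deriv dspAl t * dspS1 δ r₁ u + deriv dspOm t * dspS1 δ r₂ u
    + (- deriv dspAl t - deriv dspOm t) * dspS1 δ ρ u

noncomputable def dspQuu (δ r₁ r₂ ρ t u : ℝ) : ℝ :=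
  dspAl t * dspS2 δ r₁ u + dspOm t * dspS2 δ r₂ u + (1 - dspAl t - dspOm t) * dspS2 δ ρ u

lemma dspQu_pos {δ r₁ r₂ ρ : ℝ} (hδ : 0 < δ) (h₁ : 0 < r₁) (h₂ : 0 < r₂) (h₃ : 0 < ρ) (t u : ℝ) :
    0 < dspQu δ r₁ r₂ ρ t u := by
  have a1 : 0 < dspS1 δ r₁ u := mul_pos h₁ (dspEta_pos hδ _)
  have a2 : 0 < dspS1 δ r₂ u := mul_pos h₂ (dspEta_pos hδ _)
  have a3 : 0 < dspS1 δ ρ u := mul_pos h₃ (dspEta_pos hδ _)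
  have b1 := dspAl_nonneg t
  have b2 := dspOm_nonneg t
  have b3 := dsp_sum_le t
  set m := min (dspS1 δ r₁ u) (min (dspS1 δ r₂ u) (dspS1 δ ρ u)) with hm
  have hm0 : 0 < m := lt_min a1 (lt_min a2 a3)
  have c1 : m ≤ dspS1 δ r₁ u := min_le_left _ _
  have c2 : m ≤ dspS1 δ r₂ u := (min_le_right _ _).trans (min_le_left _ _)
  have c3 : m ≤ dspS1 δ ρ u := (min_le_right _ _).trans (min_le_right _ _)
  have : m ≤ dspQu δ r₁ r₂ ρ t u := by
    unfold dspQu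
    have d1 := mul_le_mul_of_nonneg_left c1 b1
    have d2 := mul_le_mul_of_nonneg_left c2 b2
    have d3 := mul_le_mul_of_nonneg_left c3 b3
    linarith
  linarith

lemma dspQt_hasDerivAt {δ r₁ r₂ ρ : ℝ} (hδ : 0 < δ) (h₁ : 0 < r₁) (h₂ : 0 < r₂) (h₃ : 0 < ρ)
    (t u : ℝ) : HasDerivAt (dspQt δ r₁ r₂ ρ t) (dspQtu δ r₁ r₂ ρ t u) u := by
  unfold dspQt dspQtu
  exact (((dspS_hasDerivAt hδ h₁ u).const_mul _).add
    ((((dspS_hasDerivAt hδ h₂ u).sub_const _).sub_const _).const_mul _)).add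
    (((dspS_hasDerivAt hδ h₃ u).sub_const _).const_mul _)

lemma dspQu_hasDerivAt {δ r₁ r₂ ρ : ℝ} (hδ : 0 < δ) (h₁ : 0 < r₁) (h₂ : 0 < r₂) (h₃ : 0 < ρ)
    (t u : ℝ) : HasDerivAt (dspQu δ r₁ r₂ ρ t) (dspQuu δ r₁ r₂ ρ t u) u := by
  unfold dspQu dspQuu
  exact (((dspS1_hasDerivAt hδ h₁ u).const_mul _).add
    ((dspS1_hasDerivAt hδ h₂ u).const_mul _)).add
    ((dspS1_hasDerivAt hδ h₃ u).const_mul _)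

lemma dspQ_curve {δ r₁ r₂ ρ : ℝ} (hδ : 0 < δ) (h₁ : 0 < r₁) (h₂ : 0 < r₂) (h₃ : 0 < ρ)
    {x : ℝ → ℝ} {x' t : ℝ} (hx : HasDerivAt x x' t) :
    HasDerivAt (fun s => dspQ δ r₁ r₂ ρ s (x s))
      (dspQt δ r₁ r₂ ρ t (x t) + dspQu δ r₁ r₂ ρ t (x t) * x') t := by
  unfold dspQ dspQt dspQu
  have e1 := (dspS_hasDerivAt hδ h₁ (x t)).comp t hx
  have e2 := (dspS_hasDerivAt hδ h₂ (x t)).comp t hx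
  have e3 := (dspS_hasDerivAt hδ h₃ (x t)).comp t hx
  have := (((dspAl_hasDerivAt t).mul e1).add ((dspOm_hasDerivAt t).mul
    ((e2.sub_const (r₁ ^ 2 * dspTheta δ 1)).sub_const (r₂ ^ 2 * dspTheta δ 1)))).add
    ((((dspAl_hasDerivAt t).const_sub 1).sub (dspOm_hasDerivAt t)).mul
      (e3.sub_const (r₂ ^ 2 * dspTheta δ 1)))
  refine this.congr_deriv ?_
  simp only [Function.comp, Pi.sub_apply]
  ring

lemma dspQu_curve {δ r₁ r₂ ρ : ℝ} (hδ : 0 < δ) (h₁ : 0 < r₁) (h₂ : 0 < r₂) (h₃ : 0 < ρ)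
    {x : ℝ → ℝ} {x' t : ℝ} (hx : HasDerivAt x x' t) :
    HasDerivAt (fun s => dspQu δ r₁ r₂ ρ s (x s))
      (dspQtu δ r₁ r₂ ρ t (x t) + dspQuu δ r₁ r₂ ρ t (x t) * x') t := by
  unfold dspQuu dspQtu dspQu
  have e1 := (dspS1_hasDerivAt hδ h₁ (x t)).comp t hx
  have e2 := (dspS1_hasDerivAt hδ h₂ (x t)).comp t hx
  have e3 := (dspS1_hasDerivAt hδ h₃ (x t)).comp t hx
  have := (((dspAl_hasDerivAt t).mul e1).add ((dspOm_hasDerivAt t).mul e2)).add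
    ((((dspAl_hasDerivAt t).const_sub 1).sub (dspOm_hasDerivAt t)).mul e3)
  refine this.congr_deriv ?_
  simp only [Function.comp, Pi.sub_apply]
  ring

lemma dsp_inv_local {δ r₁ r₂ ρ : ℝ} (hδ : 0 < δ) (h₁ : 0 < r₁) (h₂ : 0 < r₂) (h₃ : 0 < ρ)
    {x y : ℝ → ℝ} {t : ℝ}
    (hx : HasDerivAt x (-(dspQt δ r₁ r₂ ρ t (x t) / dspQu δ r₁ r₂ ρ t (x t))) t)
    (hy : HasDerivAt y (y t * ((dspQtu δ r₁ r₂ ρ t (x t) * dspQu δ r₁ r₂ ρ t (x t)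
      - dspQt δ r₁ r₂ ρ t (x t) * dspQuu δ r₁ r₂ ρ t (x t)) / dspQu δ r₁ r₂ ρ t (x t) ^ 2)) t) :
    HasDerivAt (fun s => (dspQ δ r₁ r₂ ρ s (x s), y s / dspQu δ r₁ r₂ ρ s (x s)))
      ((0 : ℝ), (0 : ℝ)) t := by
  have hp := dspQu_pos hδ h₁ h₂ h₃ t (x t)
  apply HasDerivAt.prodMk
  · refine (dspQ_curve hδ h₁ h₂ h₃ hx).congr_deriv ?_
    field_simp; ring
  · refine (hy.div (dspQu_curve hδ h₁ h₂ h₃ hx) hp.ne').congr_deriv ?_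
    field_simp; ring

lemma dsp_clopen {f : ℝ → ℝ × ℝ} (hf : Continuous f) {c : ℝ × ℝ} {J : Set ℝ}
    (hJ : IsPreconnected J) {t₀ : ℝ} (ht₀ : t₀ ∈ J) (h0 : f t₀ = c)
    (H : ∀ t ∈ J, f t = c → ∀ᶠ s in nhds t, HasDerivAt f ((0 : ℝ), (0 : ℝ)) s) :
    ∀ t ∈ J, f t = c := by
  have key : ∀ t ∈ J, f t = c → t ∈ interior {t | f t = c} := by
    intro t ht hc
    obtain ⟨e, he, hb⟩ := Metric.eventually_nhds_iff_ball.1 (H t ht hc)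
    rw [mem_interior_iff_mem_nhds]
    filter_upwards [Metric.ball_mem_nhds t he] with s hs
    have := (convex_ball t e).is_const_of_fderivWithin_eq_zero (𝕜 := ℝ) (f := f)
      (fun s hs => (hb s hs).differentiableAt.differentiableWithinAt)
      (fun s hs => by
        rw [fderivWithin_of_isOpen Metric.isOpen_ball hs]
        have h := (hb s hs).hasFDerivAt.fderiv
        rw [h]
        ext <;> simp)
      hs (Metric.mem_ball_self he)
    show f s = c
    rw [this, hc]
  have hcl : IsClosed {t | f t = c} := isClosed_eq hf continuous_const
  have := hJ.subset_of_closure_inter_subset (u := interior {t | f t = c}) isOpen_interior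
    ⟨t₀, ht₀, key t₀ ht₀ h0⟩ (by
      rintro t ⟨h1, h2⟩
      exact key t h2 (closure_minimal interior_subset hcl h1))
  intro t ht
  have h3 : t ∈ {t | f t = c} := interior_subset (this ht)
  exact h3

open Real

lemma dsp_region {δ r₁ r₂ ρ t u v : ℝ} (hδ : 0 < δ) (h₁ : 0 < r₁) (h₂ : 0 < r₂) (h₃ : 0 < ρ)
    (h13 : r₁ ≤ ρ) (h23 : r₂ ≤ ρ) (hu : |u| ≤ ρ) (hv : |v| < dspQu δ r₁ r₂ ρ t u) :
    u ^ 2 + v ^ 2 < ρ ^ 2 * (1 + δ) := by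
  have e1 := dspEta_upper hδ h₁ h13 hu
  have e2 := dspEta_upper hδ h₂ h23 hu
  have e3 := dspEta_upper hδ h₃ le_rfl hu
  have b1 := dspAl_nonneg t
  have b2 := dspOm_nonneg t
  have b3 := dsp_sum_le t
  set B := √(ρ ^ 2 - u ^ 2 + ρ ^ 2 * (δ / 2)) with hB
  have hvB : |v| < B := by
    have d1 := mul_le_mul_of_nonneg_left e1 b1
    have d2 := mul_le_mul_of_nonneg_left e2 b2
    have d3 := mul_le_mul_of_nonneg_left e3 b3
    unfold dspQu dspS1 at hv
    linarith
  have h5 : u ^ 2 ≤ ρ ^ 2 := by rw [← sq_abs u]; gcongr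
  have h6 : 0 < ρ ^ 2 * δ := by positivity
  have hBs : B ^ 2 = ρ ^ 2 - u ^ 2 + ρ ^ 2 * (δ / 2) := Real.sq_sqrt (by linarith)
  have : v ^ 2 < B ^ 2 := by rw [← sq_abs v]; gcongr
  linarith

lemma dspS_ge {δ r ρ u : ℝ} (hδ : 0 < δ) (hr : 0 < r) (hrρ : r ≤ ρ) (hu : ρ ≤ u) :
    r ^ 2 * dspTheta δ 1 ≤ dspS δ r u := by
  unfold dspS
  have : dspTheta δ 1 ≤ dspTheta δ (u / r) := by
    apply (dspTheta_strictMono hδ).monotone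
    rw [le_div_iff₀ hr]; linarith
  gcongr

lemma dspS_le {δ r ρ u : ℝ} (hδ : 0 < δ) (hr : 0 < r) (hrρ : r ≤ ρ) (hu : u ≤ -ρ) :
    dspS δ r u ≤ - (r ^ 2 * dspTheta δ 1) := by
  unfold dspS
  have : dspTheta δ (u / r) ≤ dspTheta δ (-1) := by
    apply (dspTheta_strictMono hδ).monotone
    rw [div_le_iff₀ hr]; linarith
  rw [dspTheta_neg] at this
  have := mul_le_mul_of_nonneg_left this (sq_nonneg r)
  linarith

lemma dspS_abs_lt {δ r u : ℝ} (hδ : 0 < δ) (hr : 0 < r) (hu : |u| < r) :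
    |dspS δ r u| < r ^ 2 * dspTheta δ 1 := by
  unfold dspS
  rw [abs_lt] at hu
  have h3 : 0 < r ^ 2 := by positivity
  have a1 : dspTheta δ (u / r) < dspTheta δ 1 := by
    apply dspTheta_strictMono hδ
    rw [div_lt_iff₀ hr]; linarith
  have a2 : dspTheta δ (-1) < dspTheta δ (u / r) := by
    apply dspTheta_strictMono hδ
    rw [lt_div_iff₀ hr]; linarith
  rw [dspTheta_neg] at a2
  rw [abs_lt]
  constructor
  · have := mul_lt_mul_of_pos_left a2 h3
    linarith
  · exact mul_lt_mul_of_pos_left a1 h3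

lemma dsp_bound1 {δ r₁ r₂ ρ t u : ℝ} (hδ : 0 < δ) (h₁ : 0 < r₁) (h₃ : 0 < ρ)
    (h13 : r₁ ≤ ρ) (hρ : ρ ^ 2 = r₁ ^ 2 + r₂ ^ 2) (ht : t ≤ 1 / 2)
    (hq : |dspQ δ r₁ r₂ ρ t u| < r₁ ^ 2 * dspTheta δ 1) (hθ : 0 < dspTheta δ 1) : |u| ≤ ρ := by
  by_contra hcon
  rw [not_le, lt_abs] at hcon
  have b1 := dspAl_nonneg t
  have b3 := dsp_sum_le t
  unfold dspQ at hq
  rw [dspOm_half ht] at hq b3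
  rw [abs_lt] at hq
  have hρ' : ρ ^ 2 * dspTheta δ 1 = r₁ ^ 2 * dspTheta δ 1 + r₂ ^ 2 * dspTheta δ 1 := by
    rw [hρ]; ring
  have hp2 : 0 ≤ r₂ ^ 2 * dspTheta δ 1 := by positivity
  rcases hcon with h | h
  · have e1 := mul_le_mul_of_nonneg_left (dspS_ge hδ h₁ h13 h.le) b1
    have e3 := mul_le_mul_of_nonneg_left (sub_le_sub_right (dspS_ge hδ h₃ le_rfl h.le)
      (r₂ ^ 2 * dspTheta δ 1)) b3
    rw [hρ'] at e3
    linarith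
  · have e1 := mul_le_mul_of_nonneg_left (dspS_le hδ h₁ h13 (by linarith : u ≤ -ρ)) b1
    have e3 := mul_le_mul_of_nonneg_left (sub_le_sub_right (dspS_le hδ h₃ le_rfl (by linarith : u ≤ -ρ))
      (r₂ ^ 2 * dspTheta δ 1)) b3
    rw [hρ'] at e3
    have := mul_nonneg b3 hp2
    linarith

lemma dsp_bound2 {δ r₁ r₂ ρ t u : ℝ} (hδ : 0 < δ) (h₂ : 0 < r₂) (h₃ : 0 < ρ)
    (h23 : r₂ ≤ ρ) (hρ : ρ ^ 2 = r₁ ^ 2 + r₂ ^ 2) (ht : 1 / 2 ≤ t)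
    (hq : |dspQ δ r₁ r₂ ρ t u + r₁ ^ 2 * dspTheta δ 1 + r₂ ^ 2 * dspTheta δ 1|
      < r₂ ^ 2 * dspTheta δ 1) (hθ : 0 < dspTheta δ 1) : |u| ≤ ρ := by
  by_contra hcon
  rw [not_le, lt_abs] at hcon
  have b1 := dspOm_nonneg t
  have b3 := dsp_sum_le t
  unfold dspQ at hq
  rw [dspAl_half ht] at hq b3
  rw [abs_lt] at hq
  have hρ' : ρ ^ 2 * dspTheta δ 1 = r₁ ^ 2 * dspTheta δ 1 + r₂ ^ 2 * dspTheta δ 1 := by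
    rw [hρ]; ring
  have hp2 : 0 ≤ r₂ ^ 2 * dspTheta δ 1 := by positivity
  have hp1 : 0 ≤ r₁ ^ 2 * dspTheta δ 1 := by positivity
  have hp1' := mul_nonneg b3 hp1
  rcases hcon with h | h
  · have e1 := mul_le_mul_of_nonneg_left (dspS_ge hδ h₂ h23 h.le) b1
    have e3 := mul_le_mul_of_nonneg_left (sub_le_sub_right (dspS_ge hδ h₃ le_rfl h.le)
      (r₂ ^ 2 * dspTheta δ 1)) b3
    rw [hρ'] at e3
    linarith
  · have e1 := mul_le_mul_of_nonneg_left (dspS_le hδ h₂ h23 (by linarith : u ≤ -ρ)) b1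
    have e3 := mul_le_mul_of_nonneg_left (sub_le_sub_right (dspS_le hδ h₃ le_rfl (by linarith : u ≤ -ρ))
      (r₂ ^ 2 * dspTheta δ 1)) b3
    rw [hρ'] at e3
    linarith

theorem dsp_displace {δ r₁ r₂ ρ : ℝ} (hδ : 0 < δ) (h₁ : 0 < r₁) (h₂ : 0 < r₂) (h₃ : 0 < ρ)
    (hρ : ρ ^ 2 = r₁ ^ 2 + r₂ ^ 2) {x y : ℝ → ℝ} 
    (hdx : Differentiable ℝ x) (hdy : Differentiable ℝ y)
    (H : ∀ t, x t ^ 2 + y t ^ 2 < ρ ^ 2 * (1 + δ) →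
      HasDerivAt x (-(dspQt δ r₁ r₂ ρ t (x t) / dspQu δ r₁ r₂ ρ t (x t))) t ∧
      HasDerivAt y (y t * ((dspQtu δ r₁ r₂ ρ t (x t) * dspQu δ r₁ r₂ ρ t (x t)
        - dspQt δ r₁ r₂ ρ t (x t) * dspQuu δ r₁ r₂ ρ t (x t)) / dspQu δ r₁ r₂ ρ t (x t) ^ 2)) t)
    (h0 : x 0 ^ 2 + y 0 ^ 2 < r₁ ^ 2) (hend : x 1 ^ 2 + y 1 ^ 2 < r₂ ^ 2) : False := by
  have h13 : r₁ ≤ ρ := by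
    apply le_of_sq_le_sq _ h₃.le
    nlinarith [sq_nonneg r₂]
  have h23 : r₂ ≤ ρ := by
    apply le_of_sq_le_sq _ h₃.le
    nlinarith [sq_nonneg r₁]
  have hθ : 0 < dspTheta δ 1 := by
    have := dspTheta_strictMono hδ (zero_lt_one)
    simpa [dspTheta] using this
  set f : ℝ → ℝ × ℝ := fun s => (dspQ δ r₁ r₂ ρ s (x s), y s / dspQu δ r₁ r₂ ρ s (x s)) with hf
  have hQp := dspQu_pos hδ h₁ h₂ h₃
  have hfc : Continuous f := by
    rw [continuous_iff_continuousAt]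
    intro t
    have a := (dspQ_curve hδ h₁ h₂ h₃ (hdx t).hasDerivAt).continuousAt
    have b := (dspQu_curve hδ h₁ h₂ h₃ (hdx t).hasDerivAt).continuousAt
    exact a.prodMk ((hdy t).continuousAt.div b (hQp _ _).ne')
  have hcont : Continuous fun t => x t ^ 2 + y t ^ 2 :=
    (hdx.continuous.pow 2).add (hdy.continuous.pow 2)
  have hloc : ∀ t, x t ^ 2 + y t ^ 2 < ρ ^ 2 * (1 + δ) →
      ∀ᶠ s in nhds t, HasDerivAt f ((0 : ℝ), (0 : ℝ)) s := by
    intro t ht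
    filter_upwards [hcont.continuousAt.eventually_lt continuousAt_const ht] with s hs
    exact dsp_inv_local hδ h₁ h₂ h₃ (H s hs).1 (H s hs).2
  have hfv : ∀ t, |(f t).2| < 1 → |y t| < dspQu δ r₁ r₂ ρ t (x t) := by
    intro t ht
    have hp := hQp t (x t)
    simp only [hf, abs_div, abs_of_pos hp] at ht
    rwa [div_lt_one hp] at ht
  -- forward
  have hx0 : |x 0| < r₁ := by
    apply abs_lt_of_sq_lt_sq _ h₁.le
    nlinarith [sq_nonneg (y 0)]
  have hx1 : |x 1| < r₂ := by
    apply abs_lt_of_sq_lt_sq _ h₂.le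
    nlinarith [sq_nonneg (y 1)]
  have q0 : (f 0).1 = dspS δ r₁ (x 0) := by
    simp [hf, dspQ, dspAl_zero, dspOm_half (show (0 : ℝ) ≤ 1 / 2 by norm_num)]
  have q1 : (f 1).1 = dspS δ r₂ (x 1) - r₁ ^ 2 * dspTheta δ 1 - r₂ ^ 2 * dspTheta δ 1 := by
    simp [hf, dspQ, dspOm_one, dspAl_half (show (1 : ℝ) / 2 ≤ 1 by norm_num)]
  have p0 : |(f 0).2| < 1 := by
    have hp := hQp 0 (x 0)
    simp only [hf, abs_div, abs_of_pos hp]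
    rw [div_lt_one hp]
    have := dspEta_lower hδ h₁ h0
    simpa [dspQu, dspS1, dspAl_zero, dspOm_half (show (0 : ℝ) ≤ 1 / 2 by norm_num)] using this
  have p1 : |(f 1).2| < 1 := by
    have hp := hQp 1 (x 1)
    simp only [hf, abs_div, abs_of_pos hp]
    rw [div_lt_one hp]
    have := dspEta_lower hδ h₂ hend
    simpa [dspQu, dspS1, dspOm_one, dspAl_half (show (1 : ℝ) / 2 ≤ 1 by norm_num)] using this
  have s0 := dspS_abs_lt hδ h₁ hx0
  have s1 := dspS_abs_lt hδ h₂ hx1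
  have F1 : f (1 / 2) = f 0 := by
    refine dsp_clopen hfc (J := Set.Icc 0 (1 / 2)) isPreconnected_Icc
      (t₀ := 0) (by constructor <;> norm_num) rfl ?_ (1 / 2) (by constructor <;> norm_num)
    intro t ht hc
    apply hloc
    refine dsp_region hδ h₁ h₂ h₃ h13 h23 ?_ (hfv t (by rw [hc]; exact p0))
    refine dsp_bound1 hδ h₁ h₃ h13 hρ ht.2 ?_ hθ
    have : dspQ δ r₁ r₂ ρ t (x t) = (f t).1 := rfl
    rw [this, hc, q0]
    exact s0
  have F2 : f (1 / 2) = f 1 := by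
    refine dsp_clopen hfc (J := Set.Icc (1 / 2) 1) isPreconnected_Icc
      (t₀ := 1) (by constructor <;> norm_num) rfl ?_ (1 / 2) (by constructor <;> norm_num)
    intro t ht hc
    apply hloc
    refine dsp_region hδ h₁ h₂ h₃ h13 h23 ?_ (hfv t (by rw [hc]; exact p1))
    refine dsp_bound2 hδ h₂ h₃ h23 hρ ht.1 ?_ hθ
    have : dspQ δ r₁ r₂ ρ t (x t) = (f t).1 := rfl
    rw [this, hc, q1]
    convert s1 using 2
    ring
  have : (f 0).1 = (f 1).1 := by rw [← F1, ← F2]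
  rw [q0, q1] at this
  rw [abs_lt] at s0 s1
  linarith

open Real

theorem dsp_global_flow {E : Type*} [NormedAddCommGroup E] [NormedSpace ℝ E] [CompleteSpace E]
    (V : ℝ → E → E) (K L : NNReal) (hK : ∀ t, LipschitzWith K (V t))
    (hc : ∀ x, Continuous fun t => V t x) (hL : ∀ t x, ‖V t x‖ ≤ L) (x₀ : E) :
    ∃ γ : ℝ → E, γ 0 = x₀ ∧ ∀ t, HasDerivAt γ (V t (γ t)) t := by
  have hex : ∀ n : ℕ, ∃ γ : ℝ → E, γ 0 = x₀ ∧
      ∀ t ∈ Set.Ioo (-((n : ℝ) + 1)) ((n : ℝ) + 1), HasDerivAt γ (V t (γ t)) t := by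
    intro n
    have hn : (0 : ℝ) ≤ (n : ℝ) + 1 := by positivity
    have hpl : IsPicardLindelof V (tmin := -((n : ℝ) + 1)) (tmax := (n : ℝ) + 1)
        ⟨0, by constructor <;> linarith⟩ x₀ (L * ((n : NNReal) + 1)) 0 L K :=
      { lipschitzOnWith := fun t _ => (hK t).lipschitzOnWith
        continuousOn := fun x _ => (hc x).continuousOn
        norm_le := fun t _ x _ => hL t x
        mul_max_le := by simp }
    obtain ⟨γ, h0, h⟩ := hpl.exists_eq_forall_mem_Icc_hasDerivWithinAt₀
    refine ⟨γ, h0, fun t ht => ?_⟩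
    exact (h t (Set.Ioo_subset_Icc_self ht)).hasDerivAt (Icc_mem_nhds ht.1 ht.2)
  choose γ hγ0 hγ using hex
  have huniq : ∀ n k : ℕ, n ≤ k → Set.EqOn (γ n) (γ k) (Set.Ioo (-((n : ℝ) + 1)) ((n : ℝ) + 1)) := by
    intro n k hnk
    have hnk' : (n : ℝ) ≤ k := by exact_mod_cast hnk
    have hn : (0 : ℝ) ≤ (n : ℝ) := by positivity
    refine ODE_solution_unique_of_mem_Ioo (v := V) (s := fun _ => Set.univ) (K := K) (t₀ := 0)
      (fun t _ => (hK t).lipschitzOnWith) (by constructor <;> linarith)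
      (fun t ht => ⟨hγ n t ht, trivial⟩) (fun t ht => ⟨hγ k t ?_, trivial⟩) (by rw [hγ0, hγ0])
    constructor
    · linarith [ht.1]
    · linarith [ht.2]
  refine ⟨fun t => γ ⌈|t|⌉₊ t, by simp [hγ0], fun t => ?_⟩
  obtain ⟨k, hk⟩ : ∃ k : ℕ, k = ⌈|t|⌉₊ + 1 := ⟨_, rfl⟩
  have hmem : ∀ s : ℝ, s ∈ Set.Ioo (-((⌈|s|⌉₊ : ℝ) + 1)) ((⌈|s|⌉₊ : ℝ) + 1) := by
    intro s
    have h1 := Nat.le_ceil |s|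
    have h2 := neg_abs_le s
    have h3 := le_abs_self s
    constructor <;> linarith
  have hev : (fun t => γ ⌈|t|⌉₊ t) =ᶠ[nhds t] γ k := by
    have : ∀ᶠ s in nhds t, |s| < |t| + 1 :=
      (continuous_abs.continuousAt).eventually_lt continuousAt_const (by linarith)
    filter_upwards [this] with s hs
    apply huniq _ _ _ (hmem s)
    rw [hk]
    apply Nat.ceil_le.2
    push_cast
    linarith [Nat.le_ceil |t|]
  have hle : ⌈|t|⌉₊ ≤ k := by omega
  have := hγ k t (by
    have := hmem t
    rw [hk]; push_cast
    constructor <;> linarith [this.1, this.2])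
  have h2 := this.congr_of_eventuallyEq hev
  rw [← hev.self_of_nhds] at h2
  exact h2

theorem dsp_flow_of_compact {n : ℕ} (G : ℝ × EuclideanSpace ℂ (Fin n) → ℝ)
    (hG : ContDiff ℝ (⊤ : ℕ∞) G) (hs : HasCompactSupport G) (v : EuclideanSpace ℂ (Fin n)) :
    ∃ γ : ℝ → EuclideanSpace ℂ (Fin n), γ 0 = v ∧
      ∀ t, HasDerivAt γ (Complex.I • gradient (fun w => G (t, w)) (γ t)) t := by
  set V : ℝ × EuclideanSpace ℂ (Fin n) → EuclideanSpace ℂ (Fin n) := fun p =>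
    Complex.I • (InnerProductSpace.toDual ℝ (EuclideanSpace ℂ (Fin n))).symm
      ((fderiv ℝ G p).comp (ContinuousLinearMap.inr ℝ ℝ (EuclideanSpace ℂ (Fin n)))) with hV
  have hVG : ∀ t w, Complex.I • gradient (fun w => G (t, w)) w = V (t, w) := by
    intro t w
    simp only [hV, gradient]
    congr 2
    have h1 : HasFDerivAt G (fderiv ℝ G (t, w)) (t, w) :=
      ((hG.differentiable (by simp)) _).hasFDerivAt
    have h2 : HasFDerivAt (fun w : EuclideanSpace ℂ (Fin n) => (t, w))
      (ContinuousLinearMap.inr ℝ ℝ (EuclideanSpace ℂ (Fin n))) w := hasFDerivAt_prodMk_right t w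
    exact (h1.comp w h2).fderiv
  have hfd : ContDiff ℝ (⊤ : ℕ∞) (fderiv ℝ G) := hG.fderiv_right (by simp)
  have hVs : ContDiff ℝ (⊤ : ℕ∞) V := by
    apply ContDiff.const_smul
    apply ContDiff.comp (LinearIsometryEquiv.contDiff _)
    exact hfd.clm_comp contDiff_const
  have hVc : HasCompactSupport V := by
    have h1 := hs.fderiv (𝕜 := ℝ)
    apply h1.comp_left (g := fun l : (ℝ × EuclideanSpace ℂ (Fin n)) →L[ℝ] ℝ =>
      Complex.I • (InnerProductSpace.toDual ℝ (EuclideanSpace ℂ (Fin n))).symm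
      (l.comp (ContinuousLinearMap.inr ℝ ℝ (EuclideanSpace ℂ (Fin n)))))
    simp
  obtain ⟨K, hK⟩ := hVs.lipschitzWith_of_hasCompactSupport hVc (by simp)
  obtain ⟨C, hC⟩ := hVc.exists_bound_of_continuous hVs.continuous
  obtain ⟨γ, h0, hγ⟩ := dsp_global_flow (fun t x => V (t, x)) K (Real.toNNReal C)
    (fun t => by
      have := hK.comp (LipschitzWith.prodMk_left (β := EuclideanSpace ℂ (Fin n)) t)
      rw [mul_one] at this
      exact this)
    (fun x => hVs.continuous.comp (by fun_prop))
    (fun t x => (hC _).trans (Real.le_coe_toNNReal C)) v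
  refine ⟨γ, h0, fun t => ?_⟩
  rw [hVG]
  exact hγ t

open Real

lemma dsp_proj_hasFDerivAt {n : ℕ} (j : Fin n) (v : EuclideanSpace ℂ (Fin n)) :
    HasFDerivAt (fun w : EuclideanSpace ℂ (Fin n) => w j)
      ((EuclideanSpace.proj j : EuclideanSpace ℂ (Fin n) →L[ℂ] ℂ).restrictScalars ℝ) v :=
  ((EuclideanSpace.proj j : EuclideanSpace ℂ (Fin n) →L[ℂ] ℂ).restrictScalars ℝ).hasFDerivAt

lemma dsp_proj_contDiff {n : ℕ} (j : Fin n) :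
    ContDiff ℝ (⊤ : ℕ∞) (fun w : EuclideanSpace ℂ (Fin n) => w j) :=
  ((EuclideanSpace.proj j : EuclideanSpace ℂ (Fin n) →L[ℂ] ℂ).restrictScalars ℝ).contDiff

lemma dsp_N_hasFDerivAt {m : ℕ} {c : Fin m → ℝ} {N : EuclideanSpace ℂ (Fin (m + 1)) → ℝ}
    (hN : ∀ v, N v = π * ∑ j : Fin m, c j * ‖v j.succ‖ ^ 2) (v : EuclideanSpace ℂ (Fin (m + 1))) :
    ∃ D : EuclideanSpace ℂ (Fin (m + 1)) →L[ℝ] ℝ, HasFDerivAt N D v ∧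
      ∀ h, D h = π * ∑ j : Fin m, c j * (2 * inner ℝ (v j.succ) (h j.succ)) := by
  have h1 : ∀ j : Fin m, HasFDerivAt (fun w : EuclideanSpace ℂ (Fin (m + 1)) => c j * ‖w j.succ‖ ^ 2)
      _ v := fun j => ((dsp_proj_hasFDerivAt j.succ v).norm_sq).const_mul (c j)
  have h2 := (HasFDerivAt.fun_sum (u := Finset.univ) (fun j _ => h1 j)).const_mul π
  have h3 : N = fun v => π * ∑ j : Fin m, c j * ‖v j.succ‖ ^ 2 := funext hN
  rw [h3]
  refine ⟨_, h2, fun h => ?_⟩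
  simp [mul_add]

lemma dsp_N_contDiff {m : ℕ} {c : Fin m → ℝ} {N : EuclideanSpace ℂ (Fin (m + 1)) → ℝ}
    (hN : ∀ v, N v = π * ∑ j : Fin m, c j * ‖v j.succ‖ ^ 2) : ContDiff ℝ (⊤ : ℕ∞) N := by
  have h3 : N = fun v => π * ∑ j : Fin m, c j * ‖v j.succ‖ ^ 2 := funext hN
  rw [h3]
  refine contDiff_const.mul (ContDiff.sum fun j _ => contDiff_const.mul ?_)
  exact (dsp_proj_contDiff j.succ).norm_sq ℝ

lemma dsp_gradient {m : ℕ} {c : Fin m → ℝ} {N : EuclideanSpace ℂ (Fin (m + 1)) → ℝ}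
    (hN : ∀ v, N v = π * ∑ j : Fin m, c j * ‖v j.succ‖ ^ 2) (v : EuclideanSpace ℂ (Fin (m + 1)))
    {F : ℝ × ℂ → ℝ} (hF : DifferentiableAt ℝ F (N v, v 0)) :
    (∀ k, inner ℝ (gradient (fun w => F (N w, w 0)) v 0) k = fderiv ℝ F (N v, v 0) (0, k)) ∧
    ∀ D : EuclideanSpace ℂ (Fin (m + 1)) →L[ℝ] ℝ, HasFDerivAt N D v →
      D (Complex.I • gradient (fun w => F (N w, w 0)) v) = 0 := by
  obtain ⟨D, hD, hDf⟩ := dsp_N_hasFDerivAt hN v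
  have hcomp : HasFDerivAt (fun w => F (N w, w 0)) _ v :=
    hF.hasFDerivAt.comp v (hD.prodMk (dsp_proj_hasFDerivAt 0 v))
  set g := gradient (fun w => F (N w, w 0)) v with hg
  have hgi : ∀ h, inner ℝ g h = fderiv ℝ F (N v, v 0) (D h, h 0) := by
    intro h
    rw [hg, gradient, InnerProductSpace.toDual_symm_apply, hcomp.fderiv]
    simp
  have hsing : ∀ (j : Fin (m + 1)) (k : ℂ), inner ℝ g (EuclideanSpace.single j k) = inner ℝ (g j) k := by
    intro j k
    rw [PiLp.inner_apply, Finset.sum_eq_single j]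
    · simp
    · intro i _ hi
      simp [hi]
    · simp
  constructor
  · intro k
    rw [← hsing, hgi, hDf]
    simp
  · intro D' hD'
    rw [hD'.unique hD, hDf]
    have : ∀ j : Fin m, inner ℝ (v j.succ) ((Complex.I • g) j.succ) = 0 := by
      intro j
      have h1 := hsing j.succ (Complex.I * v j.succ)
      rw [hgi, hDf] at h1
      have h2 : ∑ i : Fin m, c i * (2 * inner ℝ (v i.succ)
        ((EuclideanSpace.single j.succ (Complex.I * v j.succ) : EuclideanSpace ℂ (Fin (m + 1))) i.succ)) = 0 := by
        rw [Finset.sum_eq_single j]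
        · simp [Complex.inner]
          right; ring
        · intro i _ hi
          simp [hi]
        · simp
      rw [h2] at h1
      have h0 : (EuclideanSpace.single j.succ (Complex.I * v j.succ) : EuclideanSpace ℂ (Fin (m + 1))) 0 = 0 := by
        simp [(Fin.succ_ne_zero j).symm]
      rw [h0, mul_zero] at h1
      have h3 : fderiv ℝ F (N v, v 0) (0, 0) = 0 := map_zero _
      rw [h3] at h1
      simp [Complex.inner] at h1 ⊢
      linarith
    simp only [this]
    simp

/-- the derivative in the `z`-direction where the cutoff is one -/
lemma dsp_F_partial {F : ℝ × ℂ → ℝ} {n : ℝ} {z : ℂ} (hF : DifferentiableAt ℝ F (n, z))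
    {R R' : ℝ → ℝ} (hR : ∀ u, HasDerivAt R (R' u) u)
    (h : ∀ᶠ z' in nhds z, F (n, z') = z'.im * R z'.re) :
    fderiv ℝ F (n, z) (0, 1) = z.im * R' z.re ∧ fderiv ℝ F (n, z) (0, Complex.I) = R z.re := by
  have h2 : HasFDerivAt (fun z' => F (n, z'))
    ((fderiv ℝ F (n, z)).comp (ContinuousLinearMap.inr ℝ ℝ ℂ)) z :=
    hF.hasFDerivAt.comp z (hasFDerivAt_prodMk_right n z)
  have h3 : HasFDerivAt (fun z' : ℂ => z'.im * R z'.re) _ z :=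
    (Complex.imCLM.hasFDerivAt (x := z)).mul
      ((hR z.re).hasFDerivAt.comp z (Complex.reCLM.hasFDerivAt (x := z)))
  have h4 := h2.unique (h3.congr_of_eventuallyEq h)
  have e1 := congrArg (fun l : ℂ →L[ℝ] ℝ => l 1) h4
  have e2 := congrArg (fun l : ℂ →L[ℝ] ℝ => l Complex.I) h4
  simp at e1 e2
  exact ⟨e1, e2⟩

open Real

lemma dsp_proper {m : ℕ} {c : Fin m → ℝ} (hc : ∀ j, 0 < c j)
    {N : EuclideanSpace ℂ (Fin (m + 1)) → ℝ}
    (hN : ∀ v, N v = π * ∑ j : Fin m, c j * ‖v j.succ‖ ^ 2) :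
    IsProperMap (fun v : EuclideanSpace ℂ (Fin (m + 1)) => (N v, v 0)) := by
  have hcont : Continuous (fun v : EuclideanSpace ℂ (Fin (m + 1)) => (N v, v 0)) :=
    (dsp_N_contDiff hN).continuous.prodMk (dsp_proj_contDiff 0).continuous
  rw [isProperMap_iff_isCompact_preimage]
  refine ⟨hcont, fun K hK => ?_⟩
  apply Metric.isCompact_of_isClosed_isBounded (hK.isClosed.preimage hcont)
  obtain ⟨R, hR⟩ := hK.isBounded.exists_norm_le
  rw [isBounded_iff_forall_norm_le]
  refine ⟨√(R ^ 2 + ∑ j : Fin m, R / (π * c j)), fun v hv => ?_⟩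
  have h1 := hR _ hv
  have hn : |N v| ≤ R := (norm_fst_le ((N v, v 0) : ℝ × ℂ)).trans h1
  have hz : ‖v 0‖ ≤ R := (norm_snd_le ((N v, v 0) : ℝ × ℂ)).trans h1
  apply Real.le_sqrt_of_sq_le
  rw [EuclideanSpace.norm_sq_eq, Fin.sum_univ_succ]
  gcongr with j
  rw [le_div_iff₀ (mul_pos pi_pos (hc j))]
  have h2 : c j * ‖v j.succ‖ ^ 2 ≤ ∑ j : Fin m, c j * ‖v j.succ‖ ^ 2 :=
    Finset.single_le_sum (f := fun j => c j * ‖v j.succ‖ ^ 2)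
      (fun i _ => mul_nonneg (hc i).le (sq_nonneg _)) (Finset.mem_univ j)
  calc ‖v j.succ‖ ^ 2 * (π * c j) = π * (c j * ‖v j.succ‖ ^ 2) := by ring
    _ ≤ π * ∑ j : Fin m, c j * ‖v j.succ‖ ^ 2 := by gcongr
    _ = N v := (hN v).symm
    _ ≤ |N v| := le_abs_self _
    _ ≤ R := hn

lemma dsp_bump {L U : Set (ℝ × ℂ)} (hL : IsCompact L) (hU : IsOpen U) (hLU : L ⊆ U) :
    ∃ (Ψ : ℝ × ℂ → ℝ) (K : Set (ℝ × ℂ)), ContDiff ℝ (⊤ : ℕ∞) Ψ ∧ IsCompact K ∧ K ⊆ U ∧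
      (∀ p ∈ L, Ψ p = 1) ∧ ∀ p ∉ K, Ψ p = 0 := by
  obtain ⟨K, hK, hLK, hKU⟩ := exists_compact_between hL hU hLU
  obtain ⟨f, hf1, hf0, -⟩ := exists_contMDiffMap_one_nhds_of_subset_interior
    (n := (⊤ : ℕ∞)) (modelWithCornersSelf ℝ (ℝ × ℂ)) hL.isClosed hLK
  refine ⟨f, K, f.contMDiff.contDiff, hK, hKU, fun p hp => ?_, hf0⟩
  exact hf1.self_of_nhdsSet p hp

lemma dsp_L_compact {A : ℝ → ℝ} (hA : Continuous A) {C : Set ℝ} (hC : IsCompact C) (e : ℝ) :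
    IsCompact {p : ℝ × ℂ | p.1 ∈ C ∧ π * ‖p.2‖ ^ 2 ≤ A p.1 + e} := by
  obtain ⟨B, hB⟩ := hC.exists_bound_of_continuousOn hA.continuousOn
  have h1 : IsCompact (C ×ˢ Metric.closedBall (0 : ℂ) (√((B + e) / π))) :=
    hC.prod (isCompact_closedBall _ _)
  refine h1.of_isClosed_subset ?_ ?_
  · have h2 : IsClosed {p : ℝ × ℂ | π * ‖p.2‖ ^ 2 ≤ A p.1 + e} :=
      isClosed_le (by fun_prop) (by fun_prop)
    exact IsClosed.inter (hC.isClosed.preimage continuous_fst) h2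
  · rintro ⟨n, z⟩ ⟨hn, hz⟩
    refine ⟨hn, ?_⟩
    rw [mem_closedBall_zero_iff]
    apply Real.le_sqrt_of_sq_le
    rw [le_div_iff₀ pi_pos]
    have := (le_abs_self _).trans (hB n hn)
    dsimp at hz
    linarith

lemma dsp_L_eps {A : ℝ → ℝ} (hA : Continuous A) {C : Set ℝ} (hC : IsCompact C)
    {U : Set (ℝ × ℂ)} (hU : IsOpen U)
    (h : {p : ℝ × ℂ | p.1 ∈ C ∧ π * ‖p.2‖ ^ 2 ≤ A p.1} ⊆ U) :
    ∃ e > 0, {p : ℝ × ℂ | p.1 ∈ C ∧ π * ‖p.2‖ ^ 2 ≤ A p.1 + e} ⊆ U := by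
  have hcomp := (dsp_L_compact hA hC 1).diff hU
  have hcont : Continuous fun p : ℝ × ℂ => π * ‖p.2‖ ^ 2 - A p.1 := by fun_prop
  rcases Set.eq_empty_or_nonempty ({p : ℝ × ℂ | p.1 ∈ C ∧ π * ‖p.2‖ ^ 2 ≤ A p.1 + 1} \ U) with h0 | h0
  · exact ⟨1, one_pos, Set.sdiff_eq_empty.1 h0⟩
  · obtain ⟨p0, hp0, hmin⟩ := hcomp.exists_isMinOn h0 hcont.continuousOn
    have hpos : 0 < π * ‖p0.2‖ ^ 2 - A p0.1 := by
      by_contra hcon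
      exact hp0.2 (h ⟨hp0.1.1, by linarith⟩)
    refine ⟨min 1 ((π * ‖p0.2‖ ^ 2 - A p0.1) / 2), lt_min one_pos (by linarith), ?_⟩
    rintro p ⟨hp1, hp2⟩
    by_contra hpU
    have a1 := min_le_left 1 ((π * ‖p0.2‖ ^ 2 - A p0.1) / 2)
    have a2 := min_le_right 1 ((π * ‖p0.2‖ ^ 2 - A p0.1) / 2)
    have := hmin (show p ∈ _ from ⟨⟨hp1, by linarith⟩, hpU⟩)
    simp only [Set.mem_ofPred_eq] at this
    linarith

lemma dspS_comp {X : Type*} [NormedAddCommGroup X] [NormedSpace ℝ X] {δ : ℝ} (hδ : 0 < δ)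
    {r u : X → ℝ} (hr : ContDiff ℝ (⊤ : ℕ∞) r) (hu : ContDiff ℝ (⊤ : ℕ∞) u) (hr0 : ∀ x, r x ≠ 0) :
    ContDiff ℝ (⊤ : ℕ∞) fun x => dspS δ (r x) (u x) :=
  (hr.pow 2).mul ((dspTheta_contDiff hδ).comp (hu.div hr hr0))

lemma dspS1_comp {X : Type*} [NormedAddCommGroup X] [NormedSpace ℝ X] {δ : ℝ} (hδ : 0 < δ)
    {r u : X → ℝ} (hr : ContDiff ℝ (⊤ : ℕ∞) r) (hu : ContDiff ℝ (⊤ : ℕ∞) u) (hr0 : ∀ x, r x ≠ 0) :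
    ContDiff ℝ (⊤ : ℕ∞) fun x => dspS1 δ (r x) (u x) :=
  hr.mul ((dspEta_contDiff hδ).comp (hu.div hr hr0))

lemma dsp_quot_comp {X : Type*} [NormedAddCommGroup X] [NormedSpace ℝ X] {δ : ℝ} (hδ : 0 < δ)
    {r₁ r₂ ρ t u : X → ℝ} (hr₁ : ContDiff ℝ (⊤ : ℕ∞) r₁) (hr₂ : ContDiff ℝ (⊤ : ℕ∞) r₂)
    (hρ : ContDiff ℝ (⊤ : ℕ∞) ρ) (ht : ContDiff ℝ (⊤ : ℕ∞) t)
    (hu : ContDiff ℝ (⊤ : ℕ∞) u) (p₁ : ∀ x, 0 < r₁ x) (p₂ : ∀ x, 0 < r₂ x) (p₃ : ∀ x, 0 < ρ x) :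
    ContDiff ℝ (⊤ : ℕ∞) fun x => dspQt δ (r₁ x) (r₂ x) (ρ x) (t x) (u x) /
      dspQu δ (r₁ x) (r₂ x) (ρ x) (t x) (u x) := by
  have a1 := dspS_comp hδ hr₁ hu (fun x => (p₁ x).ne')
  have a2 := dspS_comp hδ hr₂ hu (fun x => (p₂ x).ne')
  have a3 := dspS_comp hδ hρ hu (fun x => (p₃ x).ne')
  have b1 := dspS1_comp hδ hr₁ hu (fun x => (p₁ x).ne')
  have b2 := dspS1_comp hδ hr₂ hu (fun x => (p₂ x).ne')
  have b3 := dspS1_comp hδ hρ hu (fun x => (p₃ x).ne')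
  have c1 : ContDiff ℝ (⊤ : ℕ∞) fun x => dspAl (t x) := dspAl_contDiff.comp ht
  have c2 : ContDiff ℝ (⊤ : ℕ∞) fun x => dspOm (t x) := dspOm_contDiff.comp ht
  have d1 : ContDiff ℝ (⊤ : ℕ∞) fun x => deriv dspAl (t x) :=
    (contDiff_infty_iff_deriv.1 dspAl_contDiff).2.comp ht
  have d2 : ContDiff ℝ (⊤ : ℕ∞) fun x => deriv dspOm (t x) :=
    (contDiff_infty_iff_deriv.1 dspOm_contDiff).2.comp ht
  refine ContDiff.div ?_ ?_ (fun x => (dspQu_pos hδ (p₁ x) (p₂ x) (p₃ x) _ _).ne')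
  · unfold dspQt
    fun_prop
  · unfold dspQu
    fun_prop

open Real

/-- disjoining a family of discs: on `ℂ × ℂᵐ`, identified with `ℂ^{m+1}` (the
`z`-component being coordinate `0` and the `w`-component the remaining `m` coordinates), with
`N(w) = π Σⱼ cⱼ |wⱼ|²` for positive `cⱼ`, and smooth `A₁ A₂ : ℝ → ℝ` such that
`C = {x ≥ 0 : A₁ x ≥ 0, A₂ x ≥ 0}` is compact: for every open `U` containing
`{(z,w) : N w ∈ C, π|z|² ≤ A₁(N w) + A₂(N w)}` there are a smooth time-dependent Hamiltonian
`G` vanishing (for all times) outside a compact subset `K ⊆ U`, and a Hamiltonian flow `b` of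
`G`, preserving `(z,w) ↦ N w`, whose time-one map moves `{π|z|² ≤ A₁(N w)}` off
`{π|z|² ≤ A₂(N w)}`. -/
theorem stmt_6 (m : ℕ) (hm : 1 ≤ m) (c : Fin m → ℝ) (hc : ∀ j, 0 < c j)
    (N : EuclideanSpace ℂ (Fin (m + 1)) → ℝ)
    (hN : ∀ v, N v = π * ∑ j : Fin m, c j * ‖v j.succ‖ ^ 2)
    (A₁ A₂ : ℝ → ℝ) (hA₁ : ContDiff ℝ (⊤ : ℕ∞) A₁) (hA₂ : ContDiff ℝ (⊤ : ℕ∞) A₂)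
    (hC : IsCompact {x : ℝ | 0 ≤ x ∧ 0 ≤ A₁ x ∧ 0 ≤ A₂ x})
    (U : Set (EuclideanSpace ℂ (Fin (m + 1)))) (hUopen : IsOpen U)
    (hUsub : {v : EuclideanSpace ℂ (Fin (m + 1)) |
        (0 ≤ N v ∧ 0 ≤ A₁ (N v) ∧ 0 ≤ A₂ (N v)) ∧
        π * ‖v 0‖ ^ 2 ≤ A₁ (N v) + A₂ (N v)} ⊆ U) :
    ∃ (G : ℝ × EuclideanSpace ℂ (Fin (m + 1)) → ℝ)
      (K : Set (EuclideanSpace ℂ (Fin (m + 1))))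
      (b : ℝ → EuclideanSpace ℂ (Fin (m + 1)) → EuclideanSpace ℂ (Fin (m + 1))),
      ContDiff ℝ (⊤ : ℕ∞) G ∧ IsCompact K ∧ K ⊆ U ∧
      (∀ (t : ℝ) (v : EuclideanSpace ℂ (Fin (m + 1))), v ∉ K → G (t, v) = 0) ∧
      b 0 = id ∧
      (∀ (v : EuclideanSpace ℂ (Fin (m + 1))) (t : ℝ),
        HasDerivAt (fun s => b s v) (Complex.I • gradient (fun w => G (t, w)) (b t v)) t) ∧
      (∀ (t : ℝ) (v : EuclideanSpace ℂ (Fin (m + 1))), N (b t v) = N v) ∧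
      Disjoint
        (b 1 '' {v : EuclideanSpace ℂ (Fin (m + 1)) | π * ‖v 0‖ ^ 2 ≤ A₁ (N v)})
        {v : EuclideanSpace ℂ (Fin (m + 1)) | π * ‖v 0‖ ^ 2 ≤ A₂ (N v)} := by
  have hPhi := dsp_proper hc hN
  have hNs := dsp_N_contDiff hN
  set Φ : EuclideanSpace ℂ (Fin (m + 1)) → ℝ × ℂ := fun v => (N v, v 0) with hΦ
  set C : Set ℝ := {x : ℝ | 0 ≤ x ∧ 0 ≤ A₁ x ∧ 0 ≤ A₂ x} with hCdef
  have hAc : Continuous fun x => A₁ x + A₂ x := hA₁.continuous.add hA₂.continuous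
  have hU'open : IsOpen (Φ '' Uᶜ)ᶜ := (hPhi.isClosedMap _ hUopen.isClosed_compl).isOpen_compl
  obtain ⟨e, he, hLe⟩ := dsp_L_eps hAc hC hU'open (by
    rintro ⟨n, z⟩ ⟨hn, hz⟩ ⟨v, hvU, hv⟩
    have e1 : N v = n := congrArg Prod.fst hv
    have e2 : v 0 = z := congrArg Prod.snd hv
    apply hvU
    apply hUsub
    subst e1 e2
    exact ⟨hn, hz⟩)
  obtain ⟨Ψ, K₀, hΨ, hK₀, hK₀U, hΨ1, hΨ0⟩ := dsp_bump (dsp_L_compact hAc hC e) hU'open hLe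
  obtain ⟨B, hB⟩ := hC.exists_bound_of_continuousOn hAc.continuousOn
  obtain ⟨ε, hεdef⟩ : ∃ ε, ε = e / 2 := ⟨_, rfl⟩
  have hε : 0 < ε := by rw [hεdef]; linarith
  have hBε : 0 < |B| + ε := by positivity
  obtain ⟨δ, hδdef⟩ : ∃ δ, δ = ε / (|B| + ε) := ⟨_, rfl⟩
  have hδ : 0 < δ := by rw [hδdef]; positivity
  have hδB : δ * (|B| + ε) = ε := by rw [hδdef]; field_simp
  -- radii
  have hsp : ∀ (A : ℝ → ℝ) x, 0 < dspSp ε (A x) / π := fun A x => div_pos (dspSp_pos hε _) pi_pos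
  set r₁ : ℝ → ℝ := fun x => √(dspSp ε (A₁ x) / π) with hr₁
  set r₂ : ℝ → ℝ := fun x => √(dspSp ε (A₂ x) / π) with hr₂
  have q₁ : ∀ x, r₁ x ^ 2 = dspSp ε (A₁ x) / π := fun x => Real.sq_sqrt (hsp A₁ x).le
  have q₂ : ∀ x, r₂ x ^ 2 = dspSp ε (A₂ x) / π := fun x => Real.sq_sqrt (hsp A₂ x).le
  have p₁ : ∀ x, 0 < r₁ x := fun x => Real.sqrt_pos.2 (hsp A₁ x)
  have p₂ : ∀ x, 0 < r₂ x := fun x => Real.sqrt_pos.2 (hsp A₂ x)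
  have s₁ : ContDiff ℝ (⊤ : ℕ∞) r₁ :=
    (((dspSp_contDiff hε).comp hA₁).div_const π).sqrt (fun x => (hsp A₁ x).ne')
  have s₂ : ContDiff ℝ (⊤ : ℕ∞) r₂ :=
    (((dspSp_contDiff hε).comp hA₂).div_const π).sqrt (fun x => (hsp A₂ x).ne')
  have hρpos : ∀ x, 0 < r₁ x ^ 2 + r₂ x ^ 2 := fun x => add_pos (pow_pos (p₁ x) 2) (pow_pos (p₂ x) 2)
  set ρ : ℝ → ℝ := fun x => √(r₁ x ^ 2 + r₂ x ^ 2) with hρ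
  have q₃ : ∀ x, ρ x ^ 2 = r₁ x ^ 2 + r₂ x ^ 2 := fun x => Real.sq_sqrt (hρpos x).le
  have p₃ : ∀ x, 0 < ρ x := fun x => Real.sqrt_pos.2 (hρpos x)
  have s₃ : ContDiff ℝ (⊤ : ℕ∞) ρ := ((s₁.pow 2).add (s₂.pow 2)).sqrt (fun x => (hρpos x).ne')
  clear_value r₁ r₂ ρ
  -- the Hamiltonian on the reduced space
  set F : ℝ → ℝ × ℂ → ℝ := fun t p => Ψ p * (p.2.im *
    (dspQt δ (r₁ p.1) (r₂ p.1) (ρ p.1) t p.2.re / dspQu δ (r₁ p.1) (r₂ p.1) (ρ p.1) t p.2.re)) with hF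
  have hFs : ContDiff ℝ (⊤ : ℕ∞) fun q : ℝ × (ℝ × ℂ) => F q.1 q.2 := by
    have hre : ContDiff ℝ (⊤ : ℕ∞) fun q : ℝ × (ℝ × ℂ) => q.2.2.re :=
      Complex.reCLM.contDiff.comp (contDiff_snd.comp contDiff_snd)
    have him : ContDiff ℝ (⊤ : ℕ∞) fun q : ℝ × (ℝ × ℂ) => q.2.2.im :=
      Complex.imCLM.contDiff.comp (contDiff_snd.comp contDiff_snd)
    have hfst : ContDiff ℝ (⊤ : ℕ∞) fun q : ℝ × (ℝ × ℂ) => q.2.1 :=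
      contDiff_fst.comp contDiff_snd
    exact (hΨ.comp contDiff_snd).mul (him.mul (dsp_quot_comp hδ (s₁.comp hfst) (s₂.comp hfst)
      (s₃.comp hfst) contDiff_fst hre (fun q => p₁ _) (fun q => p₂ _) (fun q => p₃ _)))
  have hFt : ∀ t, Differentiable ℝ (F t) := by
    intro t
    have : ContDiff ℝ (⊤ : ℕ∞) (F t) := hFs.comp (contDiff_const.prodMk contDiff_id)
    exact this.differentiable (by simp)
  set G : ℝ × EuclideanSpace ℂ (Fin (m + 1)) → ℝ := fun q => F q.1 (N q.2, q.2 0) with hG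
  have hGs : ContDiff ℝ (⊤ : ℕ∞) G := by
    refine hFs.comp (contDiff_fst.prodMk ((hNs.comp contDiff_snd).prodMk ?_))
    exact (dsp_proj_contDiff 0).comp contDiff_snd
  have hK : IsCompact (Φ ⁻¹' K₀) := hPhi.isCompact_preimage hK₀
  have hG0 : ∀ (t : ℝ) (v : EuclideanSpace ℂ (Fin (m + 1))), v ∉ Φ ⁻¹' K₀ → G (t, v) = 0 := by
    intro t v hv
    have : Ψ (N v, v 0) = 0 := hΨ0 _ hv
    simp only [hG, hF, this, zero_mul]
  have hGc : HasCompactSupport G := by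
    apply HasCompactSupport.intro (isCompact_Icc (a := (0 : ℝ)) (b := 1) |>.prod hK)
    rintro ⟨t, v⟩ htv
    by_cases hv : v ∈ Φ ⁻¹' K₀
    · have ht : t ∉ Set.Icc (0 : ℝ) 1 := fun ht => htv ⟨ht, hv⟩
      simp [hG, hF, dspQt, dspAl_deriv_zero ht, dspOm_deriv_zero ht]
    · exact hG0 t v hv
  choose γ hγ0 hγ using dsp_flow_of_compact G hGs hGc
  have hNconst : ∀ t v, N (γ v t) = N v := by
    intro t v
    have hd : ∀ t, HasDerivAt (fun s => N (γ v s)) 0 t := by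
      intro t
      obtain ⟨D, hD, -⟩ := dsp_N_hasFDerivAt hN (γ v t)
      have h1 := hD.comp_hasDerivAt t (hγ v t)
      have h2 := (dsp_gradient hN (γ v t) (F := F t) (hFt t _)).2 D hD
      exact h1.congr_deriv h2
    have := is_const_of_deriv_eq_zero (fun t => (hd t).differentiableAt) (fun t => (hd t).deriv) t 0
    simpa [hγ0] using this
  refine ⟨G, Φ ⁻¹' K₀, fun t v => γ v t, hGs, hK, ?_, hG0, ?_, hγ, hNconst, ?_⟩
  · intro v hv
    by_contra hvU
    exact hK₀U hv ⟨v, hvU, rfl⟩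
  · funext v; simp [hγ0]
  · rw [Set.disjoint_left]
    rintro _ ⟨v, hv, rfl⟩ hw
    have hv' : π * ‖v 0‖ ^ 2 ≤ A₁ (N v) := hv
    have hw' : π * ‖γ v 1 0‖ ^ 2 ≤ A₂ (N (γ v 1)) := hw
    rw [hNconst] at hw'
    obtain ⟨n, hn⟩ : ∃ n, n = N v := ⟨_, rfl⟩
    rw [← hn] at hv' hw'
    have hn0 : 0 ≤ n := by
      rw [hn, hN]
      exact mul_nonneg pi_pos.le (Finset.sum_nonneg fun j _ => mul_nonneg (hc j).le (sq_nonneg _))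
    have hA1n : 0 ≤ A₁ n := le_trans (by positivity) hv'
    have hA2n : 0 ≤ A₂ n := le_trans (by positivity) hw'
    have hnC : n ∈ C := ⟨hn0, hA1n, hA2n⟩
    have hsq : ∀ z : ℂ, ‖z‖ ^ 2 = z.re ^ 2 + z.im ^ 2 := by
      intro z; rw [← Complex.normSq_eq_norm_sq, Complex.normSq_apply]; ring
    have hzd : ∀ t, HasDerivAt (fun s => γ v s 0)
        (Complex.I * gradient (fun w => G (t, w)) (γ v t) 0) t := by
      intro t
      exact (dsp_proj_hasFDerivAt 0 (γ v t)).comp_hasDerivAt t (hγ v t)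
    have hxd : ∀ t, HasDerivAt (fun s => (γ v s 0).re)
        (- (gradient (fun w => G (t, w)) (γ v t) 0).im) t := by
      intro t
      refine (Complex.reCLM.hasFDerivAt.comp_hasDerivAt t (hzd t)).congr_deriv ?_
      simp
    have hyd : ∀ t, HasDerivAt (fun s => (γ v s 0).im)
        ((gradient (fun w => G (t, w)) (γ v t) 0).re) t := by
      intro t
      refine (Complex.imCLM.hasFDerivAt.comp_hasDerivAt t (hzd t)).congr_deriv ?_
      simp
    have hρn : π * (ρ n ^ 2 * (1 + δ)) ≤ A₁ n + A₂ n + e := by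
      have b1 := dspSp_le hε (A₁ n)
      have b2 := dspSp_le hε (A₂ n)
      rw [max_eq_left hA1n] at b1
      rw [max_eq_left hA2n] at b2
      have b3 : π * ρ n ^ 2 = dspSp ε (A₁ n) + dspSp ε (A₂ n) := by
        rw [q₃, q₁, q₂]; field_simp
      have b4 : A₁ n + A₂ n ≤ |B| := (le_abs_self _).trans ((hB n hnC).trans (le_abs_self _))
      have b5 : π * ρ n ^ 2 * δ ≤ (|B| + ε) * δ := by
        gcongr
        linarith
      have : π * (ρ n ^ 2 * (1 + δ)) = π * ρ n ^ 2 + π * ρ n ^ 2 * δ := by ring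
      rw [this, b3] at *
      linarith
    refine dsp_displace (x := fun s => (γ v s 0).re) (y := fun s => (γ v s 0).im)
      hδ (p₁ n) (p₂ n) (p₃ n) (q₃ n) (fun t => (hxd t).differentiableAt)
      (fun t => (hyd t).differentiableAt) ?_ ?_ ?_
    · intro t ht
      have hNn : N (γ v t) = n := by rw [hNconst, hn]
      have hg := (dsp_gradient hN (γ v t) (F := F t) (hFt t _)).1
      have hQ : ∀ u, HasDerivAt (fun u => dspQt δ (r₁ n) (r₂ n) (ρ n) t u
          / dspQu δ (r₁ n) (r₂ n) (ρ n) t u) _ u := fun u =>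
        (dspQt_hasDerivAt hδ (p₁ n) (p₂ n) (p₃ n) t u).div
          (dspQu_hasDerivAt hδ (p₁ n) (p₂ n) (p₃ n) t u)
          (dspQu_pos hδ (p₁ n) (p₂ n) (p₃ n) t u).ne'
      have hFp := dsp_F_partial (F := F t) (n := n) (z := γ v t 0) (hFt t _) hQ (by
        have hcont : Continuous fun z : ℂ => z.re ^ 2 + z.im ^ 2 := by fun_prop
        filter_upwards [hcont.continuousAt.eventually_lt continuousAt_const ht] with z hz
        have : Ψ (n, z) = 1 := by
          apply hΨ1
          refine ⟨hnC, ?_⟩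
          show π * ‖z‖ ^ 2 ≤ A₁ n + A₂ n + e
          refine le_trans ?_ hρn
          rw [hsq]
          gcongr
        simp only [hF, this, one_mul])
      rw [hNn] at hg
      have g1 := hg 1
      have g2 := hg Complex.I
      rw [hFp.1] at g1
      rw [hFp.2] at g2
      simp only [Complex.inner] at g1 g2
      simp at g1 g2
      constructor
      · refine (hxd t).congr_deriv ?_
        exact congrArg Neg.neg g2
      · refine (hyd t).congr_deriv ?_
        exact g1
    · show (γ v 0 0).re ^ 2 + (γ v 0 0).im ^ 2 < r₁ n ^ 2
      rw [← hsq, hγ0, q₁, lt_div_iff₀ pi_pos]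
      have := dspSp_gt hε (A₁ n)
      linarith
    · show (γ v 1 0).re ^ 2 + (γ v 1 0).im ^ 2 < r₂ n ^ 2
      rw [← hsq, q₂, lt_div_iff₀ pi_pos]
      have := dspSp_gt hε (A₂ n)
      linarith
end
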